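/- arXiv:1311.3409 — 3 statements merged into one kernel-verified Lean document; each statement's English description precedes it below -/
import Mathlib

section
/- Let X_1 and X_2 be independent positive random variables such that, for i = 1, 2, P(X_i > x) = (1 + o(1))·C_i·x^{α_i}·exp(−L_i·x^{p_i}) as x → ∞, where L_i, C_i, p_i are positive constants and α_1, α_2 ∈ ℝ. Set A = ((p_1·L_1)/(p_2·L_2))^{1/(p_1 + p_2)}. Then, as x → ∞, P(X_1·X_2 > x) = (1 + o(1)) · (2π·p_2·L_2/(p_1 + p_2))^{1/2} · C_1·C_2 · A^{p_2/2 + α_2 − α_1} · x^{(2·p_2·α_1 + 2·p_1·α_2 + p_1·p_2)/(2·(p_1 + p_2))} · exp( −(L_1·A^{−p_1} + L_2·A^{p_2})·x^{p_1·p_2/(p_1 + p_2)} ). -/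
open MeasureTheory ProbabilityTheory Filter

/-!
Taking logarithms turns the product into a sum of independent variables whose tails are
`T i t = C i * exp (α i * t - L i * exp (p i * t))` up to a factor tending to `1`. The tail of the
sum is asymptotically unchanged when one law is replaced by another with an equivalent tail: the
error comes from the event that the other summand alone exceeds `ξ - m`, for a constant `m`, which
is negligible because `T i (t + 1) / T i t → 0`. One may thus assume that one of the laws has an
explicit density, and the tail of the sum becomes an integral to which Laplace's method applies. Its
integrand concentrates at the point of the line `u + v = ξ` where
`p 1 * L 1 * exp (p 1 * u) = p 2 * L 2 * exp (p 2 * v)`; with `lam` this common value, the integral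
is equivalent to `T 1 u * T 2 v * √(2 * π * lam / (p 1 + p 2))`.
-/

open Asymptotics Set Real
open scoped Topology

/-- The tail function `t ↦ μ (t, ∞)` of a measure on the line, with real values. It is meant for
finite measures; an infinite tail takes the value `0`. -/
noncomputable def upperTail (μ : Measure ℝ) (t : ℝ) : ℝ := μ.real (Ioi t)

lemma upperTail_nonneg (μ : Measure ℝ) (t : ℝ) : 0 ≤ upperTail μ t := measureReal_nonneg

section Convolution

variable {μ ν ν' : Measure ℝ} [IsFiniteMeasure μ] [IsFiniteMeasure ν] [IsFiniteMeasure ν']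

lemma upperTail_le_univ (t : ℝ) : upperTail μ t ≤ μ.real univ := measureReal_mono (subset_univ _)

lemma antitone_upperTail : Antitone (upperTail μ) :=
  fun _ _ hst => measureReal_mono (Ioi_subset_Ioi hst)

lemma integrable_upperTail_sub (ξ : ℝ) : Integrable (fun v => upperTail μ (ξ - v)) ν :=
  .of_bound (antitone_upperTail.measurable.comp (by fun_prop)).aestronglyMeasurable (μ.real univ)
    (.of_forall fun v => by
      rw [norm_of_nonneg (upperTail_nonneg μ _)]
      exact upperTail_le_univ _)

lemma upperTail_conv (ξ : ℝ) : upperTail (μ ∗ ν) ξ = ∫ v, upperTail μ (ξ - v) ∂ν := by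
  have hset : MeasurableSet ((fun z : ℝ × ℝ => z.1 + z.2) ⁻¹' Ioi ξ) :=
    measurable_add measurableSet_Ioi
  have hsection (v : ℝ) : (fun u => (u, v)) ⁻¹' ((fun z : ℝ × ℝ => z.1 + z.2) ⁻¹' Ioi ξ) =
      Ioi (ξ - v) := by
    ext u
    simp [sub_lt_iff_lt_add]
  rw [upperTail, Measure.conv, map_measureReal_apply measurable_add measurableSet_Ioi,
    measureReal_def, Measure.prod_apply_symm hset,
    ← integral_toReal (measurable_measure_prodMk_right hset).aemeasurable
      (.of_forall fun v => measure_lt_top _ _)]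
  simp only [hsection]
  rfl

lemma upperTail_mul_upperTail_le (s t : ℝ) :
    upperTail μ s * upperTail ν t ≤ upperTail (μ ∗ ν) (s + t) := by
  rw [upperTail, upperTail, upperTail, Measure.conv,
    map_measureReal_apply measurable_add measurableSet_Ioi, ← measureReal_prod_prod]
  exact measureReal_mono fun z hz => show s + t < z.1 + z.2 from add_lt_add hz.1 hz.2

-- The events `u > ξ - (m + 1)` and `v > m + 1` together force `u + v > ξ`, and `u > ξ - m` is
-- negligible compared with the first of them.
lemma upperTail_sub_isLittleO_upperTail_conv
    (hμ : (fun t => upperTail μ (t + 1)) =o[atTop] upperTail μ) (hν : ∀ t, 0 < upperTail ν t)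
    (m : ℝ) : (fun ξ => upperTail μ (ξ - m)) =o[atTop] upperTail (μ ∗ ν) := by
  have hshift : (fun ξ => upperTail μ (ξ - m)) =o[atTop] fun ξ => upperTail μ (ξ - (m + 1)) := by
    refine (hμ.comp_tendsto (tendsto_atTop_add_const_right _ (-(m + 1)) tendsto_id)).congr
      (fun ξ => ?_) fun ξ => rfl
    exact congrArg (upperTail μ) (show ξ + -(m + 1) + 1 = ξ - m by ring)
  refine hshift.trans_isBigO (.of_bound (upperTail ν (m + 1))⁻¹ (.of_forall fun ξ => ?_))
  rw [norm_of_nonneg (upperTail_nonneg _ _), norm_of_nonneg (upperTail_nonneg _ _),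
    le_inv_mul_iff₀ (hν _), mul_comm]
  simpa only [sub_add_cancel] using
    upperTail_mul_upperTail_le (μ := μ) (ν := ν) (ξ - (m + 1)) (m + 1)

lemma abs_upperTail_conv_sub_le {ε m : ℝ} (hε : 0 ≤ ε)
    (h : ∀ t, m ≤ t → |upperTail ν' t - upperTail ν t| ≤ ε * upperTail ν t) (ξ : ℝ) :
    |upperTail (μ ∗ ν') ξ - upperTail (μ ∗ ν) ξ| ≤
      ε * upperTail (μ ∗ ν) ξ + (ν'.real univ + ν.real univ) * upperTail μ (ξ - m) := by
  set M := ν'.real univ + ν.real univ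
  have hbound (u : ℝ) : |upperTail ν' (ξ - u) - upperTail ν (ξ - u)| ≤
      ε * upperTail ν (ξ - u) + (Ioi (ξ - m)).indicator (fun _ => M) u := by
    have hεν : 0 ≤ ε * upperTail ν (ξ - u) := mul_nonneg hε (upperTail_nonneg _ _)
    rcases le_or_gt u (ξ - m) with hu | hu
    · rw [indicator_of_notMem (notMem_Ioi.2 hu), add_zero]
      exact h _ (by linarith)
    · rw [indicator_of_mem (mem_Ioi.2 hu)]
      calc |upperTail ν' (ξ - u) - upperTail ν (ξ - u)|
          ≤ |upperTail ν' (ξ - u)| + |upperTail ν (ξ - u)| := abs_sub _ _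
        _ = upperTail ν' (ξ - u) + upperTail ν (ξ - u) := by
          rw [abs_of_nonneg (upperTail_nonneg _ _), abs_of_nonneg (upperTail_nonneg _ _)]
        _ ≤ M := add_le_add (upperTail_le_univ _) (upperTail_le_univ _)
        _ ≤ ε * upperTail ν (ξ - u) + M := le_add_of_nonneg_left hεν
  have hindicator : Integrable ((Ioi (ξ - m)).indicator fun _ => M) μ :=
    (integrable_const M).indicator measurableSet_Ioi
  have hintegrable : Integrable (fun u => upperTail ν (ξ - u)) μ := integrable_upperTail_sub ξ
  have hdominating : Integrable
      (fun u => ε * upperTail ν (ξ - u) + (Ioi (ξ - m)).indicator (fun _ => M) u) μ :=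
    (hintegrable.const_mul ε).add hindicator
  rw [Measure.conv_comm, Measure.conv_comm (μ := μ) (ν := ν), upperTail_conv, upperTail_conv,
    ← integral_sub (integrable_upperTail_sub ξ) hintegrable]
  calc ‖∫ u, upperTail ν' (ξ - u) - upperTail ν (ξ - u) ∂μ‖
      ≤ ∫ u, ε * upperTail ν (ξ - u) + (Ioi (ξ - m)).indicator (fun _ => M) u ∂μ :=
        norm_integral_le_of_norm_le hdominating (.of_forall hbound)
    _ = ε * (∫ u, upperTail ν (ξ - u) ∂μ) + M * upperTail μ (ξ - m) := by
        rw [integral_add (hintegrable.const_mul ε) hindicator, integral_const_mul,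
          integral_indicator_const _ measurableSet_Ioi, smul_eq_mul, mul_comm M, upperTail]

lemma upperTail_conv_isEquivalent_of_isEquivalent
    (hμ : (fun t => upperTail μ (t + 1)) =o[atTop] upperTail μ) (hν : ∀ t, 0 < upperTail ν t)
    (h : upperTail ν' ~[atTop] upperTail ν) :
    upperTail (μ ∗ ν') ~[atTop] upperTail (μ ∗ ν) := by
  refine IsLittleO.of_bound fun c hc => ?_
  obtain ⟨m, hm⟩ := eventually_atTop.1 (h.isLittleO.def (half_pos hc))
  have hclose (t : ℝ) (ht : m ≤ t) :
      |upperTail ν' t - upperTail ν t| ≤ c / 2 * upperTail ν t := by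
    simpa only [Pi.sub_apply, norm_eq_abs, abs_of_nonneg (upperTail_nonneg ν t)] using hm t ht
  have hnegligible := (upperTail_sub_isLittleO_upperTail_conv hμ hν m).const_mul_left
    (ν'.real univ + ν.real univ)
  filter_upwards [hnegligible.def (half_pos hc)] with ξ hξ
  rw [norm_of_nonneg (upperTail_nonneg (μ ∗ ν) ξ)] at hξ ⊢
  calc |upperTail (μ ∗ ν') ξ - upperTail (μ ∗ ν) ξ|
      ≤ c / 2 * upperTail (μ ∗ ν) ξ + (ν'.real univ + ν.real univ) * upperTail μ (ξ - m) :=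
        abs_upperTail_conv_sub_le (half_pos hc).le hclose ξ
    _ ≤ c / 2 * upperTail (μ ∗ ν) ξ + c / 2 * upperTail (μ ∗ ν) ξ :=
        add_le_add le_rfl ((le_abs_self _).trans hξ)
    _ = c * upperTail (μ ∗ ν) ξ := by ring

end Convolution

section Laplace

lemma mul_abs_sub_mul_sq_le {c : ℝ} (hc : 0 < c) (b s : ℝ) :
    b * |s| - c * s ^ 2 ≤ b ^ 2 / (2 * c) - c / 2 * s ^ 2 := by
  have hsq : 0 ≤ (b - c * |s|) ^ 2 / (2 * c) := by positivity
  have hexpand : (b - c * |s|) ^ 2 / (2 * c) = b ^ 2 / (2 * c) - b * |s| + c / 2 * s ^ 2 := by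
    field_simp
    rw [← sq_abs s]
    ring
  linarith

variable {ι : Type*} {l : Filter ι} {φ : ℝ → ℝ} {κ : ℝ}

lemma tendsto_mul_comp_div_sqrt {lam : ι → ℝ} (hlam : Tendsto lam l atTop)
    (hφ₀ : φ 0 = 0) (hφ : Tendsto (fun u => φ u / u ^ 2) (𝓝[≠] 0) (𝓝 κ)) (s : ℝ) :
    Tendsto (fun i => lam i * φ (s / √(lam i))) l (𝓝 (κ * s ^ 2)) := by
  rcases eq_or_ne s 0 with rfl | hs
  · simpa [hφ₀] using tendsto_const_nhds
  have hpos := hlam.eventually_gt_atTop 0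
  have hscale : Tendsto (fun i => s / √(lam i)) l (𝓝[≠] 0) :=
    tendsto_nhdsWithin_iff.2 ⟨tendsto_const_nhds.div_atTop (tendsto_sqrt_atTop.comp hlam),
      hpos.mono fun i hi => div_ne_zero hs (sqrt_pos.2 hi).ne'⟩
  refine ((hφ.comp hscale).mul_const (s ^ 2)).congr' ?_
  filter_upwards [hpos] with i hi
  rw [Function.comp, div_pow, sq_sqrt hi.le]
  field_simp

lemma norm_mul_exp_neg_mul_div_sqrt_le {c b B Λ : ℝ} (hc : 0 < c) (hφ_ge : ∀ u, c * u ^ 2 ≤ φ u)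
    (hb : 0 ≤ b) {f : ℝ → ℝ} (hf : ∀ u, |f u| ≤ B * exp (b * |u|)) (hΛ : 1 ≤ Λ) (s : ℝ) :
    ‖f (s / √Λ) * exp (-(Λ * φ (s / √Λ)))‖ ≤
      B * exp (b ^ 2 / (2 * c)) * exp (-(c / 2) * s ^ 2) := by
  have hquad : c * s ^ 2 ≤ Λ * φ (s / √Λ) := by
    calc c * s ^ 2 = Λ * (c * (s / √Λ) ^ 2) := by
          rw [div_pow, sq_sqrt (by positivity)]
          field_simp
      _ ≤ Λ * φ (s / √Λ) := by gcongr; exact hφ_ge _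
  have hlin : |s / √Λ| ≤ |s| := by
    rw [abs_div, abs_of_nonneg (sqrt_nonneg _)]
    exact div_le_self (abs_nonneg _) (one_le_sqrt.2 hΛ)
  have hB : 0 ≤ B := by simpa using (abs_nonneg _).trans (hf 0)
  calc ‖f (s / √Λ) * exp (-(Λ * φ (s / √Λ)))‖
      = |f (s / √Λ)| * exp (-(Λ * φ (s / √Λ))) := by
        rw [norm_mul, norm_eq_abs, norm_of_nonneg (exp_pos _).le]
    _ ≤ B * exp (b * |s|) * exp (-(c * s ^ 2)) := by
        gcongr
        exact (hf _).trans (by gcongr)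
    _ = B * exp (b * |s| - c * s ^ 2) := by rw [mul_assoc, ← exp_add, sub_eq_add_neg]
    _ ≤ B * exp (b ^ 2 / (2 * c) - c / 2 * s ^ 2) := by
        gcongr ?_ * exp ?_
        exact mul_abs_sub_mul_sq_le hc b s
    _ = B * exp (b ^ 2 / (2 * c)) * exp (-(c / 2) * s ^ 2) := by
        rw [mul_assoc, ← exp_add, sub_eq_add_neg, neg_mul]

lemma tendsto_sqrt_mul_integral_mul_exp_neg_mul [l.IsCountablyGenerated] {c b B C : ℝ}
    (hc : 0 < c) (hφ_meas : Measurable φ) (hφ_ge : ∀ u, c * u ^ 2 ≤ φ u) (hφ₀ : φ 0 = 0)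
    (hφ : Tendsto (fun u => φ u / u ^ 2) (𝓝[≠] 0) (𝓝 κ))
    {lam : ι → ℝ} (hlam : Tendsto lam l atTop) {g : ι → ℝ → ℝ} (hg_meas : ∀ i, Measurable (g i))
    (hb : 0 ≤ b) (hg_le : ∀ᶠ i in l, ∀ u, |g i u| ≤ B * exp (b * |u|))
    (hg : ∀ s, Tendsto (fun i => g i (s / √(lam i))) l (𝓝 C)) :
    Tendsto (fun i => √(lam i) * ∫ u, g i u * exp (-(lam i * φ u))) l (𝓝 (C * √(π / κ))) := by
  have hrescale : ∀ᶠ i in l,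
      ∫ s, g i (s / √(lam i)) * exp (-(lam i * φ (s / √(lam i)))) =
        √(lam i) * ∫ u, g i u * exp (-(lam i * φ u)) := by
    filter_upwards with i
    rw [Measure.integral_comp_div (fun u => g i u * exp (-(lam i * φ u))),
      abs_of_nonneg (sqrt_nonneg _), smul_eq_mul]
  have hbound : ∀ᶠ i in l, ∀ᵐ s,
      ‖g i (s / √(lam i)) * exp (-(lam i * φ (s / √(lam i))))‖ ≤
        B * exp (b ^ 2 / (2 * c)) * exp (-(c / 2) * s ^ 2) := by
    filter_upwards [hg_le, hlam.eventually_ge_atTop 1] with i hgi hi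
    exact .of_forall (norm_mul_exp_neg_mul_div_sqrt_le hc hφ_ge hb hgi hi)
  rw [← integral_gaussian κ, ← integral_const_mul]
  refine (tendsto_integral_filter_of_dominated_convergence _ (.of_forall fun i => ?_) hbound
    ((integrable_exp_neg_mul_sq (half_pos hc)).const_mul _) (.of_forall fun s => ?_)).congr'
    hrescale
  · have := hg_meas i
    exact Measurable.aestronglyMeasurable (by fun_prop)
  · rw [neg_mul]
    exact (hg s).mul ((continuous_exp.tendsto _).comp
      (tendsto_mul_comp_div_sqrt hlam hφ₀ hφ s).neg)

end Laplace

section Phase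

/-- The normalised increment of the convolution exponent at distance `u` from its saddle point. The
constants `-1` make it vanish at `0`, and the linear terms cancel. -/
noncomputable def phase (p q u : ℝ) : ℝ := (exp (-(p * u)) - 1) / p + (exp (q * u) - 1) / q

variable {p q : ℝ}

lemma phase_zero : phase p q 0 = 0 := by
  simp only [phase, mul_zero, neg_zero, exp_zero, sub_self, zero_div, add_zero]

lemma tendsto_exp_mul_sub_one_sub_div_sq (c : ℝ) :
    Tendsto (fun u => (exp (c * u) - 1 - c * u) / u ^ 2) (𝓝[≠] 0) (𝓝 (c ^ 2 / 2)) := by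
  have hzero : Tendsto (fun u => c * u) (𝓝 0) (𝓝 0) :=
    (continuous_const_mul c).tendsto' 0 0 (mul_zero c)
  have hsq : (fun u => (c * u) ^ 2) =O[𝓝 0] fun u => u ^ 2 := by
    simp_rw [mul_pow]
    exact (isBigO_refl _ _).const_mul_left _
  have hremainder := (((exp_sub_sum_range_succ_isLittleO_pow 2).comp_tendsto hzero).trans_isBigO
    hsq).tendsto_div_nhds_zero.mono_left (nhdsWithin_le_nhds (s := {0}ᶜ))
  rw [← zero_add (c ^ 2 / 2)]
  refine (hremainder.add_const (c ^ 2 / 2)).congr' ?_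
  filter_upwards [self_mem_nhdsWithin] with u hu
  have hu : u ≠ 0 := hu
  simp only [Function.comp, Finset.sum_range_succ, Finset.sum_range_zero, Nat.factorial]
  push_cast
  field_simp
  ring

lemma tendsto_phase_div_sq (hp : p ≠ 0) (hq : q ≠ 0) :
    Tendsto (fun u => phase p q u / u ^ 2) (𝓝[≠] 0) (𝓝 ((p + q) / 2)) := by
  have hsum := ((tendsto_exp_mul_sub_one_sub_div_sq (-p)).div_const p).add
    ((tendsto_exp_mul_sub_one_sub_div_sq q).div_const q)
  rw [show (-p) ^ 2 / 2 / p + q ^ 2 / 2 / q = (p + q) / 2 by field_simp] at hsum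
  refine hsum.congr fun u => ?_
  rw [phase, neg_mul]
  field_simp
  ring

lemma le_exp_mul_sub_one_div (hp : 0 < p) (u : ℝ) : u ≤ (exp (p * u) - 1) / p := by
  rw [le_div_iff₀ hp]
  linarith [add_one_le_exp (p * u)]

lemma add_sq_le_exp_mul_sub_one_div (hp : 0 < p) {u : ℝ} (hu : 0 ≤ u) :
    u + p / 2 * u ^ 2 ≤ (exp (p * u) - 1) / p := by
  rw [le_div_iff₀ hp]
  linarith [quadratic_le_exp_of_nonneg (mul_nonneg hp.le hu)]

lemma mul_sq_le_phase (hp : 0 < p) (hq : 0 < q) (u : ℝ) :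
    min p q / 2 * u ^ 2 ≤ phase p q u := by
  have hmin_left : min p q / 2 * u ^ 2 ≤ p / 2 * u ^ 2 := by gcongr; exact min_le_left p q
  have hmin_right : min p q / 2 * u ^ 2 ≤ q / 2 * u ^ 2 := by gcongr; exact min_le_right p q
  rw [phase, ← mul_neg]
  rcases le_total 0 u with hu | hu
  · linarith [le_exp_mul_sub_one_div hp (-u), add_sq_le_exp_mul_sub_one_div hq hu]
  · have hquad := add_sq_le_exp_mul_sub_one_div hp (neg_nonneg.2 hu)
    rw [neg_sq] at hquad
    linarith [le_exp_mul_sub_one_div hq u]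

end Phase

lemma hasDerivAt_integral_Ioi {f : ℝ → ℝ} (hf : Continuous f)
    (hint : ∀ t, IntegrableOn f (Ioi t)) (t : ℝ) :
    HasDerivAt (fun s => ∫ v in Ioi s, f v) (-f t) t := by
  have hprimitive : (fun s => ∫ v in Ioi s, f v) =
      fun s => (∫ v in Ioi 0, f v) - ∫ v in (0 : ℝ)..s, f v := by
    ext s
    rw [← intervalIntegral.integral_Ioi_sub_Ioi' (hint 0) (hint s), sub_sub_cancel]
  rw [hprimitive]
  exact (hf.integral_hasStrictDerivAt 0 t).hasDerivAt.const_sub _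

lemma tendsto_exp_mul_atTop {p : ℝ} (hp : 0 < p) :
    Tendsto (fun t => exp (p * t)) atTop atTop :=
  tendsto_exp_atTop.comp (tendsto_id.const_mul_atTop hp)

lemma tendsto_linear_sub_exp_atBot (a : ℝ) {L p : ℝ} (hL : 0 < L) (hp : 0 < p) :
    Tendsto (fun t => a * t - L * exp (p * t)) atTop atBot := by
  have hlinear : (fun t => a * t) =o[atTop] fun t => L * exp (p * t) := by
    simpa only [pow_one] using
      ((isLittleO_pow_exp_pos_mul_atTop 1 hp).const_mul_left a).const_mul_right hL.ne'
  have hequiv : (fun t => -(a * t) + L * exp (p * t)) ~[atTop] fun t => L * exp (p * t) :=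
    hlinear.neg_left.add_isEquivalent IsEquivalent.refl
  refine (tendsto_neg_atTop_atBot.comp
    (hequiv.symm.tendsto_atTop ((tendsto_exp_mul_atTop hp).const_mul_atTop hL))).congr fun t => ?_
  rw [Function.comp, neg_add_rev, neg_neg, neg_add_eq_sub]

/-- Parameters of a Weibull-type tail `C * x ^ α * exp (-(L * x ^ p))`. -/
structure WeibullParams where
  (C α L p : ℝ)
  C_pos : 0 < C
  L_pos : 0 < L
  p_pos : 0 < p

namespace WeibullParams

variable (P Q : WeibullParams)

/-- The Weibull-type tail in the logarithmic variable `t = log x`. -/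
noncomputable def logTail (t : ℝ) : ℝ := P.C * exp (P.α * t - P.L * exp (P.p * t))

/-- The leading part of `-deriv P.logTail`. Unlike the derivative itself, it has a constant sign on
the whole line, so it can serve as a density. -/
noncomputable def logDensity (t : ℝ) : ℝ := P.p * P.L * exp (P.p * t) * P.logTail t

lemma logTail_eq_rpow (t : ℝ) :
    P.logTail t = P.C * exp t ^ P.α * exp (-(P.L * exp t ^ P.p)) := by
  rw [logTail, ← exp_mul, ← exp_mul, mul_assoc, ← exp_add, mul_comm t, mul_comm t, sub_eq_add_neg]

lemma logTail_pos (t : ℝ) : 0 < P.logTail t := mul_pos P.C_pos (exp_pos _)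

lemma logDensity_pos (t : ℝ) : 0 < P.logDensity t :=
  mul_pos (mul_pos (mul_pos P.p_pos P.L_pos) (exp_pos _)) (P.logTail_pos t)

lemma continuous_logTail : Continuous P.logTail := by
  unfold logTail
  fun_prop

lemma continuous_logDensity : Continuous P.logDensity :=
  (by fun_prop : Continuous fun t => P.p * P.L * exp (P.p * t)).mul P.continuous_logTail

lemma tendsto_logTail_atTop : Tendsto P.logTail atTop (𝓝 0) := by
  rw [← mul_zero P.C]
  exact (tendsto_exp_atBot.comp
    (tendsto_linear_sub_exp_atBot P.α P.L_pos P.p_pos)).const_mul P.C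

lemma logTail_add (t s : ℝ) :
    P.logTail (t + s) =
      P.logTail t * exp (P.α * s - P.L * exp (P.p * t) * (exp (P.p * s) - 1)) := by
  rw [logTail, logTail, mul_assoc, ← exp_add, mul_add P.p, exp_add (P.p * t)]
  ring_nf

lemma logTail_add_one_isLittleO : (fun t => P.logTail (t + 1)) =o[atTop] P.logTail := by
  have hstep : 0 < P.L * (exp P.p - 1) := mul_pos P.L_pos (sub_pos.2 (one_lt_exp_iff.2 P.p_pos))
  have hbot : Tendsto (fun t => P.α - P.L * (exp P.p - 1) * exp (P.p * t)) atTop atBot :=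
    tendsto_atBot_add_const_left _ _ (tendsto_neg_atTop_atBot.comp
      ((tendsto_exp_mul_atTop P.p_pos).const_mul_atTop hstep))
  refine (isLittleO_iff_tendsto fun t ht => absurd ht (P.logTail_pos t).ne').2
    ((tendsto_exp_atBot.comp hbot).congr fun t => ?_)
  rw [logTail_add, mul_div_cancel_left₀ _ (P.logTail_pos t).ne', Function.comp]
  ring_nf

lemma logDensity_isBigO_exp_neg : P.logDensity =O[atTop] fun t => exp (-1 * t) := by
  have hvanish := (tendsto_exp_atBot.comp (tendsto_linear_sub_exp_atBot (P.p + P.α + 1) P.L_pos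
    P.p_pos)).const_mul (P.p * P.L * P.C)
  refine (hvanish.isBigO_one ℝ |>.mul (isBigO_refl (fun t => exp (-1 * t)) atTop)).congr
    (fun t => ?_) fun t => one_mul _
  have hexp : exp ((P.p + P.α + 1) * t - P.L * exp (P.p * t)) * exp (-1 * t) =
      exp (P.p * t) * exp (P.α * t - P.L * exp (P.p * t)) := by
    rw [← exp_add, ← exp_add]
    ring_nf
  rw [logDensity, logTail, Function.comp]
  linear_combination (P.p * P.L * P.C) * hexp

lemma integrableOn_logDensity (t : ℝ) : IntegrableOn P.logDensity (Ioi t) :=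
  integrable_of_isBigO_exp_neg one_pos P.continuous_logDensity.continuousOn
    P.logDensity_isBigO_exp_neg

lemma hasDerivAt_logTail (t : ℝ) :
    HasDerivAt P.logTail (-((P.p * P.L * exp (P.p * t) - P.α) * P.logTail t)) t := by
  have hexp : HasDerivAt (fun s => exp (P.p * s)) (exp (P.p * t) * P.p) t := by
    simpa only [mul_one, id] using ((hasDerivAt_id t).const_mul P.p).exp
  have hexponent : HasDerivAt (fun s => P.α * s - P.L * exp (P.p * s))
      (P.α * 1 - P.L * (exp (P.p * t) * P.p)) t :=
    ((hasDerivAt_id t).const_mul P.α).sub (hexp.const_mul P.L)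
  refine (hexponent.exp.const_mul P.C).congr_deriv ?_
  rw [logTail]
  ring

lemma integral_Ioi_logDensity_isEquivalent :
    (fun t => ∫ v in Ioi t, P.logDensity v) ~[atTop] P.logTail := by
  have hrate : Tendsto (fun t => P.p * P.L * exp (P.p * t)) atTop atTop :=
    (tendsto_exp_mul_atTop P.p_pos).const_mul_atTop (mul_pos P.p_pos P.L_pos)
  have hrate_gt := hrate.eventually_gt_atTop P.α
  have hratio : Tendsto
      (fun t => -P.logDensity t / -((P.p * P.L * exp (P.p * t) - P.α) * P.logTail t))
      atTop (𝓝 1) := by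
    have hone : Tendsto (fun t => 1 + P.α / (P.p * P.L * exp (P.p * t) - P.α)) atTop (𝓝 1) := by
      simpa only [add_zero, sub_eq_add_neg] using
        (tendsto_const_nhds.div_atTop (tendsto_atTop_add_const_right _ (-P.α) hrate)).const_add 1
    refine hone.congr' ?_
    filter_upwards [hrate_gt] with t ht
    rw [neg_div_neg_eq, logDensity, mul_div_mul_right _ _ (P.logTail_pos t).ne',
      one_add_div (sub_pos.2 ht).ne', sub_add_cancel]
  exact isEquivalent_of_tendsto_one <| HasDerivAt.lhopital_zero_atTop
    (.of_forall (hasDerivAt_integral_Ioi P.continuous_logDensity P.integrableOn_logDensity))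
    (.of_forall P.hasDerivAt_logTail)
    (hrate_gt.mono fun t ht => neg_ne_zero.2 (mul_pos (sub_pos.2 ht) (P.logTail_pos t)).ne')
    (tendsto_integral_Ioi_zero tendsto_id) P.tendsto_logTail_atTop hratio

/-- A finite measure with an explicit density whose tail is equivalent to `P.logTail`. It is cut
off at `0` because `P.logDensity` need not be integrable at `-∞`. -/
noncomputable def logModel : Measure ℝ :=
  (volume.restrict (Ioi 0)).withDensity fun t => ENNReal.ofReal (P.logDensity t)

instance : IsFiniteMeasure P.logModel :=
  isFiniteMeasure_withDensity_ofReal (P.integrableOn_logDensity 0).hasFiniteIntegral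

lemma integral_logModel (f : ℝ → ℝ) :
    ∫ v, f v ∂P.logModel = ∫ v in Ioi 0, P.logDensity v * f v := by
  rw [logModel, integral_withDensity_eq_integral_toReal_smul
    P.continuous_logDensity.measurable.ennreal_ofReal (.of_forall fun v => ENNReal.ofReal_lt_top)]
  simp only [ENNReal.toReal_ofReal (P.logDensity_pos _).le, smul_eq_mul]

lemma upperTail_logModel {t : ℝ} (ht : 0 ≤ t) :
    upperTail P.logModel t = ∫ v in Ioi t, P.logDensity v := by
  rw [upperTail, measureReal_def, logModel, withDensity_apply _ measurableSet_Ioi,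
    Measure.restrict_restrict measurableSet_Ioi, inter_eq_self_of_subset_left (Ioi_subset_Ioi ht),
    ← integral_eq_lintegral_of_nonneg_ae (.of_forall fun v => (P.logDensity_pos v).le)
      P.continuous_logDensity.aestronglyMeasurable]

lemma upperTail_logModel_isEquivalent : upperTail P.logModel ~[atTop] P.logTail :=
  P.integral_Ioi_logDensity_isEquivalent.congr_left <|
    (eventually_ge_atTop 0).mono fun _ ht => (P.upperTail_logModel ht).symm

/-- The first coordinate of the point that minimises `P.L * exp (P.p * u) + Q.L * exp (Q.p * v)`
on the line `u + v = ξ`; the second coordinate is `saddle Q P ξ`. -/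
noncomputable def saddle (ξ : ℝ) : ℝ :=
  (Q.p * ξ + log (Q.p * Q.L / (P.p * P.L))) / (P.p + Q.p)

/-- The common value of `P.p * P.L * exp (P.p * u)` and `Q.p * Q.L * exp (Q.p * v)` at the saddle
point `(u, v)`: the large parameter of Laplace's method. -/
noncomputable def saddleScale (ξ : ℝ) : ℝ := P.p * P.L * exp (P.p * saddle P Q ξ)

lemma saddle_add_saddle (ξ : ℝ) : saddle P Q ξ + saddle Q P ξ = ξ := by
  have hp := P.p_pos
  have hq := Q.p_pos
  rw [saddle, saddle, ← inv_div (P.p * P.L), log_inv]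
  field_simp
  ring

lemma saddleScale_pos (ξ : ℝ) : 0 < saddleScale P Q ξ :=
  mul_pos (mul_pos P.p_pos P.L_pos) (exp_pos _)

lemma saddleScale_comm (ξ : ℝ) : saddleScale P Q ξ = saddleScale Q P ξ := by
  have hp := P.p_pos
  have hq := Q.p_pos
  have hP := mul_pos P.p_pos P.L_pos
  have hQ := mul_pos Q.p_pos Q.L_pos
  refine log_injOn_pos (saddleScale_pos P Q ξ) (saddleScale_pos Q P ξ) ?_
  rw [saddleScale, saddleScale, log_mul hP.ne' (exp_pos _).ne', log_mul hQ.ne' (exp_pos _).ne',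
    log_exp, log_exp, saddle, saddle, log_div hP.ne' hQ.ne', log_div hQ.ne' hP.ne']
  field_simp
  ring

lemma tendsto_saddle_atTop : Tendsto (saddle P Q) atTop atTop :=
  (tendsto_atTop_add_const_right _ _ (tendsto_id.const_mul_atTop Q.p_pos)).atTop_div_const
    (add_pos P.p_pos Q.p_pos)

lemma tendsto_saddleScale_atTop : Tendsto (saddleScale P Q) atTop atTop :=
  ((tendsto_exp_mul_atTop P.p_pos).comp (tendsto_saddle_atTop P Q)).const_mul_atTop
    (mul_pos P.p_pos P.L_pos)

lemma saddleScale_mul_phase (ξ s : ℝ) :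
    saddleScale P Q ξ * phase P.p Q.p s =
      P.L * exp (P.p * saddle P Q ξ) * (exp (-(P.p * s)) - 1) +
        Q.L * exp (Q.p * saddle Q P ξ) * (exp (Q.p * s) - 1) := by
  have hp := P.p_pos
  have hq := Q.p_pos
  rw [phase, mul_add]
  nth_rw 2 [saddleScale_comm]
  rw [saddleScale, saddleScale]
  field_simp

lemma logDensity_mul_logTail_eq (ξ s : ℝ) :
    Q.logDensity (saddle Q P ξ + s) * P.logTail (saddle P Q ξ - s) =
      P.logTail (saddle P Q ξ) * Q.logTail (saddle Q P ξ) * saddleScale P Q ξ *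
        (exp ((Q.p + Q.α - P.α) * s) * exp (-(saddleScale P Q ξ * phase P.p Q.p s))) := by
  have hexponent : exp (Q.p * s) *
      (exp (Q.α * s - Q.L * exp (Q.p * saddle Q P ξ) * (exp (Q.p * s) - 1)) *
        exp (P.α * -s - P.L * exp (P.p * saddle P Q ξ) * (exp (P.p * -s) - 1))) =
      exp ((Q.p + Q.α - P.α) * s) * exp (-(saddleScale P Q ξ * phase P.p Q.p s)) := by
    rw [← exp_add, ← exp_add, ← exp_add, saddleScale_mul_phase]
    ring_nf
  rw [← hexponent, logDensity, sub_eq_add_neg (saddle P Q ξ), logTail_add, logTail_add,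
    saddleScale_comm, saddleScale, mul_add Q.p, exp_add (Q.p * _)]
  ring

/-- The Laplace approximation at the saddle point of the tail of a sum of two independent variables
with tails `P.logTail` and `Q.logTail`. -/
noncomputable def saddleApprox (ξ : ℝ) : ℝ :=
  P.logTail (saddle P Q ξ) * Q.logTail (saddle Q P ξ) *
    √(2 * π * saddleScale P Q ξ / (P.p + Q.p))

lemma saddleApprox_pos (ξ : ℝ) : 0 < saddleApprox P Q ξ := by
  have hp := P.p_pos
  have hq := Q.p_pos
  have hP := P.logTail_pos (saddle P Q ξ)
  have hQ := Q.logTail_pos (saddle Q P ξ)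
  have hscale := saddleScale_pos P Q ξ
  unfold saddleApprox
  positivity

/-- The constant `A` of the product asymptotics, by which the saddle point deviates from a fixed
proportion: `exp (saddle P Q (log x))` is `x ^ (Q.p / (P.p + Q.p)) / A`. -/
noncomputable def saddleRatio : ℝ := (P.p * P.L / (Q.p * Q.L)) ^ (1 / (P.p + Q.p))

lemma saddleRatio_pos : 0 < saddleRatio P Q :=
  rpow_pos_of_pos (div_pos (mul_pos P.p_pos P.L_pos) (mul_pos Q.p_pos Q.L_pos)) _

lemma saddle_eq_sub_log_saddleRatio (ξ : ℝ) :
    saddle P Q ξ = Q.p / (P.p + Q.p) * ξ - log (saddleRatio P Q) := by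
  rw [saddle, saddleRatio, log_rpow (div_pos (mul_pos P.p_pos P.L_pos) (mul_pos Q.p_pos Q.L_pos)),
    ← inv_div (P.p * P.L), log_inv]
  ring

lemma saddle_eq_add_log_saddleRatio (ξ : ℝ) :
    saddle Q P ξ = P.p / (P.p + Q.p) * ξ + log (saddleRatio P Q) := by
  have hp := P.p_pos
  have hq := Q.p_pos
  rw [← sub_eq_of_eq_add' (saddle_add_saddle P Q ξ).symm,
    saddle_eq_sub_log_saddleRatio]
  field_simp
  ring

lemma logTail_saddle_mul_logTail_saddle (ξ : ℝ) :
    P.logTail (saddle P Q ξ) * Q.logTail (saddle Q P ξ) =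
      P.C * Q.C * exp (P.α * saddle P Q ξ + Q.α * saddle Q P ξ) *
        exp (-((P.L * saddleRatio P Q ^ (-P.p) + Q.L * saddleRatio P Q ^ Q.p) *
          exp (P.p * Q.p / (P.p + Q.p) * ξ))) := by
  have hP : exp (P.p * saddle P Q ξ) =
      saddleRatio P Q ^ (-P.p) * exp (P.p * Q.p / (P.p + Q.p) * ξ) := by
    rw [saddle_eq_sub_log_saddleRatio, rpow_def_of_pos (saddleRatio_pos P Q), ← exp_add]
    ring_nf
  have hQ : exp (Q.p * saddle Q P ξ) =
      saddleRatio P Q ^ Q.p * exp (P.p * Q.p / (P.p + Q.p) * ξ) := by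
    rw [saddle_eq_add_log_saddleRatio, rpow_def_of_pos (saddleRatio_pos P Q), ← exp_add]
    ring_nf
  rw [logTail, logTail, mul_mul_mul_comm, ← exp_add, mul_assoc (P.C * Q.C), ← exp_add, hP, hQ]
  ring_nf

lemma sqrt_saddleScale (ξ : ℝ) :
    √(2 * π * saddleScale P Q ξ / (P.p + Q.p)) =
      √(2 * π * Q.p * Q.L / (P.p + Q.p)) * exp (Q.p / 2 * saddle Q P ξ) := by
  rw [show Q.p / 2 * saddle Q P ξ = Q.p * saddle Q P ξ / 2 by ring, exp_half,
    ← sqrt_mul' _ (exp_pos _).le, saddleScale_comm, saddleScale]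
  ring_nf

lemma saddleApprox_log {x : ℝ} (hx : 0 < x) :
    saddleApprox P Q (log x) =
      (2 * π * Q.p * Q.L / (P.p + Q.p)) ^ ((1 : ℝ) / 2) * (P.C * Q.C) *
        saddleRatio P Q ^ (Q.p / 2 + Q.α - P.α) *
        x ^ ((2 * Q.p * P.α + 2 * P.p * Q.α + P.p * Q.p) / (2 * (P.p + Q.p))) *
        exp (-((P.L * saddleRatio P Q ^ (-P.p) + Q.L * saddleRatio P Q ^ Q.p) *
          x ^ (P.p * Q.p / (P.p + Q.p)))) := by
  have hp := P.p_pos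
  have hq := Q.p_pos
  have hpower : exp (P.α * saddle P Q (log x) + Q.α * saddle Q P (log x)) *
      exp (Q.p / 2 * saddle Q P (log x)) =
      saddleRatio P Q ^ (Q.p / 2 + Q.α - P.α) *
        x ^ ((2 * Q.p * P.α + 2 * P.p * Q.α + P.p * Q.p) / (2 * (P.p + Q.p))) := by
    rw [rpow_def_of_pos hx, rpow_def_of_pos (saddleRatio_pos P Q), ← exp_add, ← exp_add,
      saddle_eq_sub_log_saddleRatio, saddle_eq_add_log_saddleRatio]
    congr 1
    field_simp
    ring
  rw [saddleApprox, logTail_saddle_mul_logTail_saddle, sqrt_saddleScale, ← sqrt_eq_rpow,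
    mul_assoc _ (_ ^ (_ / _ + _ - _)), ← hpower, rpow_def_of_pos hx, mul_comm (log x) (_ / _)]
  ring

variable {P Q} {μ ν : Measure ℝ}

lemma tendsto_upperTail_div_logTail (h : upperTail μ ~[atTop] P.logTail) :
    Tendsto (fun t => upperTail μ t / P.logTail t) atTop (𝓝 1) :=
  (isEquivalent_iff_tendsto_one (.of_forall fun t => (P.logTail_pos t).ne')).1 h

lemma upperTail_add_one_isLittleO (h : upperTail μ ~[atTop] P.logTail) :
    (fun t => upperTail μ (t + 1)) =o[atTop] upperTail μ :=
  ((h.comp_tendsto (tendsto_atTop_add_const_right _ 1 tendsto_id)).trans_isLittleO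
    P.logTail_add_one_isLittleO).trans_isEquivalent h.symm

lemma upperTail_pos_of_isEquivalent [IsFiniteMeasure μ] (h : upperTail μ ~[atTop] P.logTail)
    (t : ℝ) : 0 < upperTail μ t := by
  obtain ⟨s, hts, hs⟩ := ((eventually_ge_atTop t).and
    (h.eventually_pos (.of_forall P.logTail_pos))).exists
  exact hs.trans_le (antitone_upperTail hts)

lemma inv_logTail_le_of_le {t m : ℝ} (ht : t ≤ m) :
    (P.logTail t)⁻¹ ≤ P.C⁻¹ * exp (|P.α| * |t| + P.L * exp (P.p * m)) := by
  have hL := P.L_pos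
  have hp := P.p_pos
  have hC := P.C_pos
  rw [logTail, mul_inv, ← exp_neg, neg_sub, sub_eq_neg_add]
  gcongr
  rw [← abs_mul]
  exact neg_le_abs _

lemma exists_upperTail_div_logTail_le [IsFiniteMeasure μ]
    (h : upperTail μ ~[atTop] P.logTail) :
    ∃ B, ∀ t, upperTail μ t / P.logTail t ≤ B * exp (|P.α| * t⁻) := by
  obtain ⟨m, hm⟩ := eventually_atTop.1
    ((tendsto_upperTail_div_logTail h).eventually_le_const one_lt_two)
  have hC := P.C_pos
  set D := μ.real univ * P.C⁻¹ * exp (|P.α| * |m| + P.L * exp (P.p * m))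
  have hD : 0 ≤ D := by positivity
  refine ⟨2 + D, fun t => ?_⟩
  rcases le_total m t with ht | ht
  · have hone : 1 ≤ exp (|P.α| * t⁻) :=
      one_le_exp (mul_nonneg (abs_nonneg _) (negPart_nonneg t))
    calc upperTail μ t / P.logTail t ≤ 2 := hm t ht
      _ ≤ 2 + D := le_add_of_nonneg_right hD
      _ ≤ (2 + D) * exp (|P.α| * t⁻) := le_mul_of_one_le_right (by positivity) hone
  · have habs : |t| ≤ |m| + t⁻ := by
      refine abs_le.2 ⟨?_, ?_⟩
      · linarith [neg_le_negPart t, abs_nonneg m]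
      · linarith [le_abs_self m, negPart_nonneg t]
    calc upperTail μ t / P.logTail t = upperTail μ t * (P.logTail t)⁻¹ := div_eq_mul_inv _ _
      _ ≤ μ.real univ * (P.C⁻¹ * exp (|P.α| * |t| + P.L * exp (P.p * m))) := by
          gcongr
          · exact (inv_pos.2 (P.logTail_pos t)).le
          · exact upperTail_le_univ t
          · exact inv_logTail_le_of_le ht
      _ ≤ μ.real univ * (P.C⁻¹ * exp (|P.α| * (|m| + t⁻) + P.L * exp (P.p * m))) := by
          gcongr
      _ = D * exp (|P.α| * t⁻) := by
          rw [show |P.α| * (|m| + t⁻) + P.L * exp (P.p * m) =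
            |P.α| * |m| + P.L * exp (P.p * m) + |P.α| * t⁻ by ring, exp_add]
          ring
      _ ≤ (2 + D) * exp (|P.α| * t⁻) := by
          gcongr
          exact le_add_of_nonneg_left zero_le_two

/-- The factor in front of the exponential in the convolution integral of `μ` with `Q.logModel`,
at distance `s` from the saddle point and normalised to tend to `1` there. -/
noncomputable def saddleAmplitude (P Q : WeibullParams) (μ : Measure ℝ) (ξ s : ℝ) : ℝ :=
  (Ioi 0).indicator 1 (saddle Q P ξ + s) * exp ((Q.p + Q.α - P.α) * s) *
    (upperTail μ (saddle P Q ξ - s) / P.logTail (saddle P Q ξ - s))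

lemma tendsto_saddleAmplitude (h : upperTail μ ~[atTop] P.logTail) {δ : ℝ → ℝ}
    (hδ : Tendsto δ atTop (𝓝 0)) :
    Tendsto (fun ξ => saddleAmplitude P Q μ ξ (δ ξ)) atTop (𝓝 1) := by
  have hindicator : Tendsto (fun ξ => (Ioi 0).indicator (1 : ℝ → ℝ) (saddle Q P ξ + δ ξ))
      atTop (𝓝 1) := by
    refine tendsto_const_nhds.congr' ?_
    filter_upwards [((tendsto_saddle_atTop Q P).atTop_add hδ).eventually_gt_atTop 0] with ξ hξ
    rw [indicator_of_mem (mem_Ioi.2 hξ), Pi.one_apply]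
  have hexp : Tendsto (fun ξ => exp ((Q.p + Q.α - P.α) * δ ξ)) atTop (𝓝 1) := by
    simpa only [mul_zero, exp_zero] using (hδ.const_mul (Q.p + Q.α - P.α)).rexp
  have hpoint : Tendsto (fun ξ => saddle P Q ξ - δ ξ) atTop atTop := by
    simpa only [sub_eq_add_neg] using (tendsto_saddle_atTop P Q).atTop_add hδ.neg
  have hproduct := (hindicator.mul hexp).mul ((tendsto_upperTail_div_logTail h).comp hpoint)
  rwa [mul_one, mul_one] at hproduct

variable [IsFiniteMeasure μ] [IsFiniteMeasure ν]

lemma upperTail_conv_logModel (ξ : ℝ) :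
    upperTail (μ ∗ Q.logModel) ξ =
      P.logTail (saddle P Q ξ) * Q.logTail (saddle Q P ξ) * saddleScale P Q ξ *
        ∫ s, saddleAmplitude P Q μ ξ s * exp (-(saddleScale P Q ξ * phase P.p Q.p s)) := by
  rw [upperTail_conv, integral_logModel, ← integral_indicator measurableSet_Ioi,
    ← integral_const_mul, ← integral_add_left_eq_self _ (saddle Q P ξ)]
  refine integral_congr_ae (.of_forall fun s => ?_)
  have hshift : ξ - (saddle Q P ξ + s) = saddle P Q ξ - s := by
    linarith [saddle_add_saddle P Q ξ]
  have hfactor := logDensity_mul_logTail_eq P Q ξ s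
  have hpos := P.logTail_pos (saddle P Q ξ - s)
  by_cases hs : saddle Q P ξ + s ∈ Ioi 0
  · simp only [saddleAmplitude, indicator_of_mem hs, hshift, Pi.one_apply]
    calc Q.logDensity (saddle Q P ξ + s) * upperTail μ (saddle P Q ξ - s)
        = Q.logDensity (saddle Q P ξ + s) * P.logTail (saddle P Q ξ - s) *
          (upperTail μ (saddle P Q ξ - s) / P.logTail (saddle P Q ξ - s)) := by
          rw [mul_assoc, mul_div_cancel₀ _ hpos.ne']
      _ = _ := by
          rw [hfactor]
          ring
  · simp only [saddleAmplitude, indicator_of_notMem hs, zero_mul, mul_zero]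

lemma measurable_saddleAmplitude (ξ : ℝ) : Measurable (saddleAmplitude P Q μ ξ) := by
  have htail : Measurable (upperTail μ) := antitone_upperTail.measurable
  have hmodel : Measurable P.logTail := P.continuous_logTail.measurable
  have hindicator : Measurable ((Ioi (0 : ℝ)).indicator (1 : ℝ → ℝ)) :=
    measurable_one.indicator measurableSet_Ioi
  unfold saddleAmplitude
  fun_prop

lemma exists_abs_saddleAmplitude_le (h : upperTail μ ~[atTop] P.logTail) :
    ∃ B, ∀ᶠ ξ in atTop, ∀ s,
      |saddleAmplitude P Q μ ξ s| ≤ B * exp ((|Q.p + Q.α - P.α| + |P.α|) * |s|) := by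
  obtain ⟨B, hB⟩ := exists_upperTail_div_logTail_le h
  refine ⟨B, ?_⟩
  have hB₀ : 0 ≤ B := by
    simpa using (div_nonneg (upperTail_nonneg μ 0) (P.logTail_pos 0).le).trans (hB 0)
  filter_upwards [(tendsto_saddle_atTop P Q).eventually_ge_atTop 0] with ξ hξ s
  have hindicator : |(Ioi 0).indicator (1 : ℝ → ℝ) (saddle Q P ξ + s)| ≤ 1 := by
    simpa using norm_indicator_le_norm_self (1 : ℝ → ℝ) (saddle Q P ξ + s) (s := Ioi 0)
  have hexp : exp ((Q.p + Q.α - P.α) * s) ≤ exp (|Q.p + Q.α - P.α| * |s|) := by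
    rw [← abs_mul]
    exact exp_le_exp.2 (le_abs_self _)
  have hnegPart : (saddle P Q ξ - s)⁻ ≤ |s| :=
    sup_le (by linarith [le_abs_self s]) (abs_nonneg s)
  have hratio : |upperTail μ (saddle P Q ξ - s) / P.logTail (saddle P Q ξ - s)| ≤
      B * exp (|P.α| * |s|) := by
    rw [abs_of_nonneg (div_nonneg (upperTail_nonneg _ _) (P.logTail_pos _).le)]
    exact (hB _).trans (by gcongr)
  calc |saddleAmplitude P Q μ ξ s|
      ≤ 1 * exp (|Q.p + Q.α - P.α| * |s|) * (B * exp (|P.α| * |s|)) := by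
        rw [saddleAmplitude, abs_mul, abs_mul, abs_of_pos (exp_pos _)]
        gcongr
    _ = B * exp ((|Q.p + Q.α - P.α| + |P.α|) * |s|) := by
        rw [add_mul, exp_add]
        ring

lemma upperTail_conv_logModel_isEquivalent (h : upperTail μ ~[atTop] P.logTail) :
    upperTail (μ ∗ Q.logModel) ~[atTop] saddleApprox P Q := by
  obtain ⟨B, hB⟩ := exists_abs_saddleAmplitude_le (Q := Q) h
  have hp := P.p_pos
  have hq := Q.p_pos
  have hscale := tendsto_saddleScale_atTop P Q
  have hlaplace := tendsto_sqrt_mul_integral_mul_exp_neg_mul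
    (by positivity : 0 < min P.p Q.p / 2) (by unfold phase; fun_prop) (mul_sq_le_phase hp hq)
    phase_zero (tendsto_phase_div_sq hp.ne' hq.ne') hscale measurable_saddleAmplitude
    (by positivity) hB fun s => tendsto_saddleAmplitude h
      (tendsto_const_nhds.div_atTop (tendsto_sqrt_atTop.comp hscale))
  rw [one_mul] at hlaplace
  have hlimit : √(π / ((P.p + Q.p) / 2)) ≠ 0 := by positivity
  refine ((IsEquivalent.refl (u := fun ξ => P.logTail (saddle P Q ξ) * Q.logTail (saddle Q P ξ) *
    √(saddleScale P Q ξ))).mul ((isEquivalent_const_iff_tendsto hlimit).2 hlaplace)).congr_left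
    (.of_forall fun ξ => ?_) |>.congr_right (.of_forall fun ξ => ?_)
  · rw [upperTail_conv_logModel, Pi.mul_apply, ← mul_assoc,
      mul_assoc (_ * _) √(saddleScale P Q ξ) √(saddleScale P Q ξ),
      mul_self_sqrt (saddleScale_pos P Q ξ).le]
  · rw [saddleApprox, Pi.mul_apply, Function.const_apply, mul_assoc (_ * _),
      ← sqrt_mul (saddleScale_pos P Q ξ).le]
    congr 2
    field_simp

theorem upperTail_conv_isEquivalent (hμ : upperTail μ ~[atTop] P.logTail)
    (hν : upperTail ν ~[atTop] Q.logTail) :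
    upperTail (μ ∗ ν) ~[atTop] saddleApprox P Q :=
  (upperTail_conv_isEquivalent_of_isEquivalent (upperTail_add_one_isLittleO hμ)
    (upperTail_pos_of_isEquivalent Q.upperTail_logModel_isEquivalent)
    (hν.trans Q.upperTail_logModel_isEquivalent.symm)).trans
    (upperTail_conv_logModel_isEquivalent hμ)

end WeibullParams

section RandomVariables

variable {Ω : Type*} {mΩ : MeasurableSpace Ω} {κ : Measure Ω} {X Y : Ω → ℝ}

lemma upperTail_map_log (hX : Measurable X) (hpos : ∀ᵐ ω ∂κ, 0 < X ω) (t : ℝ) :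
    upperTail (κ.map fun ω => log (X ω)) t = (κ {ω | X ω > exp t}).toReal := by
  rw [upperTail, map_measureReal_apply (by fun_prop) measurableSet_Ioi]
  refine congrArg ENNReal.toReal (measure_congr ?_)
  filter_upwards [hpos] with ω hω
  exact propext (lt_log_iff_exp_lt hω)

lemma map_log_mul_eq_conv [IsFiniteMeasure κ] (hX : Measurable X) (hY : Measurable Y)
    (hXpos : ∀ᵐ ω ∂κ, 0 < X ω) (hYpos : ∀ᵐ ω ∂κ, 0 < Y ω) (hindep : IndepFun X Y κ) :
    (κ.map fun ω => log (X ω * Y ω)) =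
      (κ.map fun ω => log (X ω)) ∗ κ.map fun ω => log (Y ω) := by
  refine (Measure.map_congr ?_).trans <|
    (hindep.comp measurable_log measurable_log).map_add_eq_map_conv_map (by fun_prop) (by fun_prop)
  filter_upwards [hXpos, hYpos] with ω hXω hYω
  exact log_mul hXω.ne' hYω.ne'

lemma upperTail_map_log_isEquivalent (P : WeibullParams) (hX : Measurable X)
    (hpos : ∀ᵐ ω ∂κ, 0 < X ω)
    (h : Tendsto (fun x => (κ {ω | X ω > x}).toReal /
      (P.C * x ^ P.α * exp (-(P.L * x ^ P.p)))) atTop (𝓝 1)) :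
    upperTail (κ.map fun ω => log (X ω)) ~[atTop] P.logTail := by
  refine isEquivalent_of_tendsto_one ((h.comp tendsto_exp_atTop).congr fun t => ?_)
  rw [Pi.div_apply, upperTail_map_log hX hpos, P.logTail_eq_rpow, Function.comp]

end RandomVariables

/-- tail asymptotics of a product of two independent random variables
with Weibull-type tails; Lemma `lem0`, equation (qTang). -/
theorem product_tail_asymptotics
    {Ω : Type*} [MeasureSpace Ω] [IsProbabilityMeasure (ℙ : Measure Ω)]
    (X₁ X₂ : Ω → ℝ) (hX₁ : Measurable X₁) (hX₂ : Measurable X₂)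
    (hpos₁ : ∀ᵐ ω ∂ℙ, 0 < X₁ ω) (hpos₂ : ∀ᵐ ω ∂ℙ, 0 < X₂ ω)
    (hindep : IndepFun X₁ X₂ ℙ)
    (C₁ C₂ L₁ L₂ p₁ p₂ : ℝ) (α₁ α₂ : ℝ)
    (hC₁ : 0 < C₁) (hC₂ : 0 < C₂) (hL₁ : 0 < L₁) (hL₂ : 0 < L₂)
    (hp₁ : 0 < p₁) (hp₂ : 0 < p₂)
    (htail₁ : Tendsto (fun x : ℝ =>
        (ℙ {ω | X₁ ω > x}).toReal / (C₁ * x ^ α₁ * Real.exp (-(L₁ * x ^ p₁))))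
      atTop (nhds 1))
    (htail₂ : Tendsto (fun x : ℝ =>
        (ℙ {ω | X₂ ω > x}).toReal / (C₂ * x ^ α₂ * Real.exp (-(L₂ * x ^ p₂))))
      atTop (nhds 1))
    (A : ℝ) (hA : A = ((p₁ * L₁) / (p₂ * L₂)) ^ (1 / (p₁ + p₂))) :
    Tendsto (fun x : ℝ =>
        (ℙ {ω | X₁ ω * X₂ ω > x}).toReal /
          ((2 * Real.pi * p₂ * L₂ / (p₁ + p₂)) ^ ((1 : ℝ) / 2) * (C₁ * C₂) *
            A ^ (p₂ / 2 + α₂ - α₁) *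
            x ^ ((2 * p₂ * α₁ + 2 * p₁ * α₂ + p₁ * p₂) / (2 * (p₁ + p₂))) *
            Real.exp (-((L₁ * A ^ (-p₁) + L₂ * A ^ p₂) * x ^ (p₁ * p₂ / (p₁ + p₂))))))
      atTop (nhds 1) := by
  let P : WeibullParams := ⟨C₁, α₁, L₁, p₁, hC₁, hL₁, hp₁⟩
  let Q : WeibullParams := ⟨C₂, α₂, L₂, p₂, hC₂, hL₂, hp₂⟩
  have hsum := WeibullParams.upperTail_conv_isEquivalent
    (upperTail_map_log_isEquivalent P hX₁ hpos₁ htail₁)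
    (upperTail_map_log_isEquivalent Q hX₂ hpos₂ htail₂)
  rw [← map_log_mul_eq_conv hX₁ hX₂ hpos₁ hpos₂ hindep] at hsum
  have hratio := ((isEquivalent_iff_tendsto_one
    (.of_forall fun ξ => (WeibullParams.saddleApprox_pos P Q ξ).ne')).1 hsum).comp tendsto_log_atTop
  refine hratio.congr' ?_
  filter_upwards [eventually_gt_atTop 0] with x hx
  rw [Function.comp, Pi.div_apply, WeibullParams.saddleApprox_log P Q hx,
    upperTail_map_log (X := fun ω => X₁ ω * X₂ ω) (hX₁.mul hX₂)
      (by filter_upwards [hpos₁, hpos₂] with ω using mul_pos),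
    exp_log hx, hA]
  rfl
end

section
/- Let X_1 and X_2 be independent positive random variables such that, for i = 1, 2, P(X_i > x) = (1 + o(1))·C_i·x^{α_i}·exp(−L_i·x^{p_i}) as x → ∞, where L_i, C_i, p_i are positive constants and α_1, α_2 ∈ ℝ, and set A = ((p_1·L_1)/(p_2·L_2))^{1/(p_1 + p_2)}. Suppose in addition that X_1 has a density h_1 which is bounded and ultimately decreasing (i.e., decreasing on [x_0, ∞) for some x_0), and h_1(x) = (1 + o(1))·L_1·p_1·x^{p_1 − 1}·P(X_1 > x) as x → ∞. Then the product X_1·X_2 has a density h satisfying h(x) = (1 + o(1))·L_1·p_1·A^{−p_1}·x^{p_1·p_2/(p_1 + p_2) − 1}·P(X_1·X_2 > x) as x → ∞. -/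
open MeasureTheory ProbabilityTheory Filter
open scoped Topology ENNReal Asymptotics

/-!
Let `T` be the tail of `X₁`, `μ` the law of `X₂` and `g z = z h₁ z`, so that
`g z ~ L₁ p₁ z ^ p₁ T z`. By independence `P(X₁ X₂ > x) = ∫ T (x / y) dμ(y)`, while `X₁ X₂` has
the density `x⁻¹ ∫ g (x / y) dμ(y)`. Both integrals are, to exponential accuracy, governed by the
minimum of `L₁ z ^ p₁ + L₂ y ^ p₂` under the constraint `z y = x`, attained at
`z = A⁻¹ x ^ (p₂ / (p₁ + p₂))`. Where `z` differs from this saddle point by more than a fixed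
factor, the exponent exceeds its minimum by a fixed proportion, which beats every power of `x`.
Both integrals are thus carried by `z` within a factor arbitrarily close to `1` of the saddle
point, where `L₁ p₁ z ^ p₁` may be replaced by its value
`L₁ p₁ A ^ (-p₁) x ^ (p₁ p₂ / (p₁ + p₂))`.
-/

/-! ### Functions decaying at a Weibull rate -/

/-- `f x` decays like `exp (-L x ^ p)` at infinity, to logarithmic accuracy. For `L ≠ 0` this forces
`f x ≠ 0` eventually, since `Real.log 0 = 0`. -/
def HasWeibullRate (f : ℝ → ℝ) (L p : ℝ) : Prop :=
  Tendsto (fun x => -Real.log (f x) / x ^ p) atTop (𝓝 L)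

lemma hasWeibullRate_exp (L p : ℝ) : HasWeibullRate (fun x => Real.exp (-(L * x ^ p))) L p := by
  refine tendsto_const_nhds.congr' ?_
  filter_upwards [eventually_gt_atTop 0] with x hx
  have : 0 < x ^ p := by positivity
  rw [Real.log_exp, neg_neg, mul_div_cancel_right₀ L this.ne']

namespace HasWeibullRate

variable {f g : ℝ → ℝ} {L p : ℝ}

lemma eventually_ne_zero (h : HasWeibullRate f L p) (hL : L ≠ 0) : ∀ᶠ x in atTop, f x ≠ 0 :=
  (h.eventually_ne hL).mono fun x hx h0 => hx (by simp [h0])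

lemma eventually_le_exp (h : HasWeibullRate f L p) {c : ℝ} (hc : c < L) :
    ∀ᶠ x in atTop, f x ≤ Real.exp (-(c * x ^ p)) := by
  filter_upwards [h.eventually_const_lt hc, eventually_gt_atTop 0] with x hcx hx
  rw [lt_div_iff₀ (by positivity)] at hcx
  exact (Real.le_exp_log (f x)).trans (Real.exp_le_exp.2 (by linarith))

lemma eventually_exp_le (h : HasWeibullRate f L p) (hL : L ≠ 0) (hf : ∀ᶠ x in atTop, 0 ≤ f x)
    {c : ℝ} (hc : L < c) : ∀ᶠ x in atTop, Real.exp (-(c * x ^ p)) ≤ f x := by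
  filter_upwards [h.eventually_lt_const hc, h.eventually_ne_zero hL, hf, eventually_gt_atTop 0]
    with x hcx hne hnonneg hx
  rw [div_lt_iff₀ (by positivity)] at hcx
  rw [← Real.le_log_iff_exp_le (hnonneg.lt_of_ne' hne)]
  linarith

lemma of_tendsto_div (h : HasWeibullRate f L p) (hL : L ≠ 0) (hp : 0 < p) {c q : ℝ} (hc : c ≠ 0)
    (hg : Tendsto (fun x => g x / (c * x ^ q * f x)) atTop (𝓝 1)) : HasWeibullRate g L p := by
  have hlog : Tendsto (fun x : ℝ => Real.log x / x ^ p) atTop (𝓝 0) :=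
    (isLittleO_log_rpow_atTop hp).tendsto_div_nhds_zero
  have hratio : Tendsto (fun x => Real.log (g x / (c * x ^ q * f x)) + Real.log c) atTop
      (𝓝 (Real.log 1 + Real.log c)) := (hg.log one_ne_zero).add_const _
  have hlim := (h.sub (hratio.div_atTop (tendsto_rpow_atTop hp))).sub (hlog.const_mul q)
  rw [mul_zero, sub_zero, sub_zero] at hlim
  refine hlim.congr' ?_
  filter_upwards [h.eventually_ne_zero hL, hg.eventually_ne one_ne_zero, eventually_gt_atTop 0]
    with x hf hgx hx
  have hxq : x ^ q ≠ 0 := (Real.rpow_pos_of_pos hx q).ne'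
  have hden : c * x ^ q * f x ≠ 0 := mul_ne_zero (mul_ne_zero hc hxq) hf
  have hg0 : g x ≠ 0 := (div_ne_zero_iff.1 hgx).1
  rw [Real.log_div hg0 hden, Real.log_mul (mul_ne_zero hc hxq) hf, Real.log_mul hc hxq,
    Real.log_rpow hx]
  ring

end HasWeibullRate

/-- A function on `(0, ∞)` behaving like the tail of a positive variable with Weibull rate; its
values on `(-∞, 0]` are irrelevant. -/
structure HasWeibullDecay (f : ℝ → ℝ) (L p : ℝ) : Prop where
  measurable : Measurable f
  nonneg : ∀ z, 0 < z → 0 ≤ f z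
  bddAbove : ∀ R, BddAbove (f '' Set.Ioc 0 R)
  rate : HasWeibullRate f L p

namespace HasWeibullDecay

variable {f : ℝ → ℝ} {L p : ℝ}

lemma eventually_nonneg (h : HasWeibullDecay f L p) : ∀ᶠ z in atTop, 0 ≤ f z :=
  (eventually_gt_atTop 0).mono h.nonneg

lemma exists_le_mul_exp (h : HasWeibullDecay f L p) (hp : 0 < p) {c : ℝ} (hc : 0 ≤ c)
    (hcL : c < L) : ∃ K, 0 ≤ K ∧ ∀ z, 0 < z → f z ≤ K * Real.exp (-(c * z ^ p)) := by
  obtain ⟨R, hR⟩ := eventually_atTop.1 (h.rate.eventually_le_exp hcL)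
  obtain ⟨M, hM⟩ := h.bddAbove R
  refine ⟨max 1 (M * Real.exp (c * R ^ p)), by positivity, fun z hz => ?_⟩
  rcases le_total R z with hRz | hzR
  · calc f z ≤ 1 * Real.exp (-(c * z ^ p)) := by rw [one_mul]; exact hR z hRz
      _ ≤ _ := by gcongr; exact le_max_left _ _
  · have hfM : f z ≤ M := hM (Set.mem_image_of_mem f ⟨hz, hzR⟩)
    have hM0 : 0 ≤ M := (h.nonneg z hz).trans hfM
    have hexp : 1 ≤ Real.exp (c * R ^ p) * Real.exp (-(c * z ^ p)) := by
      have : c * z ^ p ≤ c * R ^ p := by gcongr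
      rw [← Real.exp_add]
      exact Real.one_le_exp (by linarith)
    calc f z ≤ M * (Real.exp (c * R ^ p) * Real.exp (-(c * z ^ p))) :=
          hfM.trans (le_mul_of_one_le_right hM0 hexp)
      _ = M * Real.exp (c * R ^ p) * Real.exp (-(c * z ^ p)) := by ring
      _ ≤ _ := by gcongr; exact le_max_right _ _

lemma integrable_comp_div (h : HasWeibullDecay f L p) (hL : 0 < L) (hp : 0 < p) {μ : Measure ℝ}
    [IsFiniteMeasure μ] (hμ : ∀ᵐ y ∂μ, 0 < y) {x : ℝ} (hx : 0 < x) :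
    Integrable (fun y => f (x / y)) μ := by
  obtain ⟨K, -, hK⟩ := h.exists_le_mul_exp hp le_rfl hL
  refine .of_bound (h.measurable.comp (by fun_prop)).aestronglyMeasurable K ?_
  filter_upwards [hμ] with y hy
  have hxy : 0 < x / y := div_pos hx hy
  rw [Real.norm_of_nonneg (h.nonneg _ hxy)]
  simpa using hK _ hxy

end HasWeibullDecay

lemma antitone_measureReal_Ioi (μ : Measure ℝ) [IsFiniteMeasure μ] :
    Antitone fun x => μ.real (Set.Ioi x) :=
  fun _ _ hxy => measureReal_mono (Set.Ioi_subset_Ioi hxy)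

lemma HasWeibullRate.hasWeibullDecay_measureReal_Ioi {μ : Measure ℝ} [IsFiniteMeasure μ] {L p : ℝ}
    (h : HasWeibullRate (fun x => μ.real (Set.Ioi x)) L p) :
    HasWeibullDecay (fun x => μ.real (Set.Ioi x)) L p where
  measurable := (antitone_measureReal_Ioi μ).measurable
  nonneg _ _ := measureReal_nonneg
  bddAbove _ := ⟨μ.real Set.univ, by
    rintro _ ⟨z, -, rfl⟩
    exact measureReal_mono (Set.subset_univ _)⟩
  rate := h

/-! ### Exponential moments -/

lemma integrable_of_measureReal_le_rpow {Ω : Type*} [MeasurableSpace Ω] {μ : Measure Ω}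
    [IsFiniteMeasure μ] {Z : Ω → ℝ} (hZ : AEMeasurable Z μ) (hZ0 : 0 ≤ᵐ[μ] Z) {r : ℝ} (hr : 1 < r)
    (htail : ∀ᶠ t : ℝ in atTop, μ.real {ω | t < Z ω} ≤ t ^ (-r)) : Integrable Z μ := by
  obtain ⟨T, hT⟩ := eventually_atTop.1 (htail.and (eventually_gt_atTop 0))
  have hT0 : 0 < T := (hT T le_rfl).2
  refine ⟨hZ.aestronglyMeasurable, ?_⟩
  rw [hasFiniteIntegral_iff_ofReal hZ0, lintegral_eq_lintegral_meas_lt μ hZ0 hZ,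
    ← Set.Ioc_union_Ioi_eq_Ioi hT0.le]
  refine (lintegral_union_le _ _ _).trans_lt (ENNReal.add_lt_top.2 ⟨?_, ?_⟩)
  · calc ∫⁻ t in Set.Ioc 0 T, μ {ω | t < Z ω} ≤ ∫⁻ _ in Set.Ioc 0 T, μ Set.univ :=
          lintegral_mono fun _ => measure_mono (Set.subset_univ _)
      _ < ⊤ := by simp [ENNReal.mul_lt_top_iff]
  · calc ∫⁻ t in Set.Ioi T, μ {ω | t < Z ω} ≤ ∫⁻ t in Set.Ioi T, ENNReal.ofReal (t ^ (-r)) :=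
          setLIntegral_mono' measurableSet_Ioi fun t ht => by
            rw [← ofReal_measureReal]
            exact ENNReal.ofReal_le_ofReal (hT t (le_of_lt ht)).1
      _ < ⊤ := (integrableOn_Ioi_rpow_of_lt (by linarith) hT0).lintegral_lt_top

lemma HasWeibullRate.integrable_exp_mul_rpow {μ : Measure ℝ} [IsFiniteMeasure μ]
    (hμ : ∀ᵐ y ∂μ, 0 < y) {L p : ℝ} (h : HasWeibullRate (fun x => μ.real (Set.Ioi x)) L p)
    (hp : 0 < p) {c : ℝ} (hc : 0 < c) (hcL : c < L) :
    Integrable (fun y => Real.exp (c * y ^ p)) μ := by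
  obtain ⟨b, hcb, hbL⟩ := exists_between hcL
  have hlim : Tendsto (fun t : ℝ => (Real.log t / c) ^ p⁻¹) atTop atTop :=
    (tendsto_rpow_atTop (by positivity)).comp (Real.tendsto_log_atTop.atTop_div_const hc)
  refine integrable_of_measureReal_le_rpow (by fun_prop) (ae_of_all _ fun y => (Real.exp_pos _).le)
    ((one_lt_div hc).2 hcb) ?_
  filter_upwards [hlim.eventually (h.eventually_le_exp hbL), eventually_gt_atTop 1] with t hle ht
  have ht0 : 0 < t := by linarith
  have hlog : 0 < Real.log t := Real.log_pos ht
  calc μ.real {y | t < Real.exp (c * y ^ p)} = μ.real (Set.Ioi ((Real.log t / c) ^ p⁻¹)) := by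
        refine measureReal_congr ?_
        filter_upwards [hμ] with y hy
        refine propext (Iff.symm ?_)
        change _ < y ↔ t < _
        rw [Real.rpow_inv_lt_iff_of_pos (by positivity) hy.le hp, div_lt_iff₀ hc,
          Real.log_lt_iff_lt_exp ht0, mul_comm]
    _ ≤ Real.exp (-(b * ((Real.log t / c) ^ p⁻¹) ^ p)) := hle
    _ = t ^ (-(b / c)) := by
        rw [Real.rpow_inv_rpow (by positivity) hp.ne', Real.rpow_def_of_pos ht0]
        ring_nf

/-! ### The saddle point -/

/-- The `z`-coordinate of the minimiser of `L₁ z ^ p₁ + L₂ y ^ p₂` under the constraint `z y = x`;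
the `y`-coordinate is `x / saddle L₁ p₁ L₂ p₂ x = saddle L₂ p₂ L₁ p₁ x`. -/
noncomputable def saddle (L₁ p₁ L₂ p₂ x : ℝ) : ℝ :=
  (p₂ * L₂ / (p₁ * L₁)) ^ (1 / (p₁ + p₂)) * x ^ (p₂ / (p₁ + p₂))

/-- The minimum of `L₁ z ^ p₁ + L₂ y ^ p₂` under the constraint `z y = x`, as the value at the
saddle point. -/
noncomputable def saddleExponent (L₁ p₁ L₂ p₂ x : ℝ) : ℝ :=
  L₁ * saddle L₁ p₁ L₂ p₂ x ^ p₁ + L₂ * (x / saddle L₁ p₁ L₂ p₂ x) ^ p₂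

/-- The set of `y` for which `x / y` is within a factor `exp τ` of the saddle point. -/
def saddleWindow (L₁ p₁ L₂ p₂ τ x : ℝ) : Set ℝ :=
  {y | |Real.log (x / y / saddle L₁ p₁ L₂ p₂ x)| < τ}

section Saddle

variable {L₁ L₂ p₁ p₂ : ℝ}

lemma measurableSet_saddleWindow (τ x : ℝ) : MeasurableSet (saddleWindow L₁ p₁ L₂ p₂ τ x) :=
  measurableSet_lt (by fun_prop) measurable_const

lemma saddle_pos (hL₁ : 0 < L₁) (hL₂ : 0 < L₂) (hp₁ : 0 < p₁) (hp₂ : 0 < p₂) {x : ℝ} (hx : 0 < x) :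
    0 < saddle L₁ p₁ L₂ p₂ x := by
  unfold saddle; positivity

lemma tendsto_saddle_atTop (hL₁ : 0 < L₁) (hL₂ : 0 < L₂) (hp₁ : 0 < p₁) (hp₂ : 0 < p₂) :
    Tendsto (saddle L₁ p₁ L₂ p₂) atTop atTop :=
  (tendsto_rpow_atTop (by positivity)).const_mul_atTop (by positivity)

lemma div_saddle (hL₁ : 0 < L₁) (hL₂ : 0 < L₂) (hp₁ : 0 < p₁) (hp₂ : 0 < p₂) {x : ℝ} (hx : 0 < x) :
    x / saddle L₁ p₁ L₂ p₂ x = saddle L₂ p₂ L₁ p₁ x := by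
  rw [div_eq_iff (saddle_pos hL₁ hL₂ hp₁ hp₂ hx).ne']
  unfold saddle
  rw [mul_mul_mul_comm, add_comm p₂ p₁, ← Real.mul_rpow (by positivity) (by positivity),
    ← Real.rpow_add hx, ← add_div, div_mul_div_cancel₀ (by positivity), div_self (by positivity),
    div_self (by positivity), Real.one_rpow, Real.rpow_one, one_mul]

lemma tendsto_div_saddle_atTop (hL₁ : 0 < L₁) (hL₂ : 0 < L₂) (hp₁ : 0 < p₁) (hp₂ : 0 < p₂) :
    Tendsto (fun x => x / saddle L₁ p₁ L₂ p₂ x) atTop atTop :=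
  (tendsto_saddle_atTop hL₂ hL₁ hp₂ hp₁).congr' <| by
    filter_upwards [eventually_gt_atTop 0] with x hx
    rw [div_saddle hL₁ hL₂ hp₁ hp₂ hx]

/-- The Lagrange condition for the constrained minimum, in logarithmic coordinates. -/
lemma saddle_critical (hL₁ : 0 < L₁) (hL₂ : 0 < L₂) (hp₁ : 0 < p₁) (hp₂ : 0 < p₂) {x : ℝ}
    (hx : 0 < x) :
    p₁ * (L₁ * saddle L₁ p₁ L₂ p₂ x ^ p₁) = p₂ * (L₂ * (x / saddle L₁ p₁ L₂ p₂ x) ^ p₂) := by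
  have hz := saddle_pos hL₁ hL₂ hp₁ hp₂ hx
  have hpow : saddle L₁ p₁ L₂ p₂ x ^ p₁ * saddle L₁ p₁ L₂ p₂ x ^ p₂ =
      p₂ * L₂ / (p₁ * L₁) * x ^ p₂ := by
    rw [← Real.rpow_add hz, saddle, Real.mul_rpow (by positivity) (by positivity),
      ← Real.rpow_mul (by positivity), ← Real.rpow_mul hx.le,
      div_mul_cancel₀ _ (by positivity), div_mul_cancel₀ _ (by positivity), Real.rpow_one]
  rw [Real.div_rpow hx.le hz.le]
  field_simp at hpow ⊢
  linarith

lemma saddle_rpow (hL₁ : 0 < L₁) (hL₂ : 0 < L₂) (hp₁ : 0 < p₁) (hp₂ : 0 < p₂) {x : ℝ} (hx : 0 < x) :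
    saddle L₁ p₁ L₂ p₂ x ^ p₁ =
      ((p₁ * L₁ / (p₂ * L₂)) ^ (1 / (p₁ + p₂))) ^ (-p₁) * x ^ (p₁ * p₂ / (p₁ + p₂)) := by
  rw [saddle, Real.mul_rpow (by positivity) (by positivity), ← Real.rpow_mul hx.le,
    Real.rpow_neg (by positivity), ← Real.inv_rpow (by positivity), ← Real.inv_rpow (by positivity),
    inv_div]
  ring_nf

lemma saddleExponent_eq (hL₁ : 0 < L₁) (hL₂ : 0 < L₂) (hp₁ : 0 < p₁) (hp₂ : 0 < p₂) {x : ℝ}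
    (hx : 0 < x) :
    saddleExponent L₁ p₁ L₂ p₂ x = L₁ * (1 + p₁ / p₂) * saddle L₁ p₁ L₂ p₂ x ^ p₁ := by
  have hcrit := saddle_critical hL₁ hL₂ hp₁ hp₂ hx
  rw [saddleExponent]
  field_simp
  linarith

lemma saddleExponent_pos (hL₁ : 0 < L₁) (hL₂ : 0 < L₂) (hp₁ : 0 < p₁) (hp₂ : 0 < p₂) {x : ℝ}
    (hx : 0 < x) : 0 < saddleExponent L₁ p₁ L₂ p₂ x := by
  have := saddle_pos hL₁ hL₂ hp₁ hp₂ hx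
  rw [saddleExponent_eq hL₁ hL₂ hp₁ hp₂ hx]
  positivity

lemma tendsto_saddleExponent_atTop (hL₁ : 0 < L₁) (hL₂ : 0 < L₂) (hp₁ : 0 < p₁) (hp₂ : 0 < p₂) :
    Tendsto (saddleExponent L₁ p₁ L₂ p₂) atTop atTop := by
  have hlim : Tendsto (fun x => L₁ * (1 + p₁ / p₂) * saddle L₁ p₁ L₂ p₂ x ^ p₁) atTop atTop :=
    ((tendsto_rpow_atTop hp₁).comp (tendsto_saddle_atTop hL₁ hL₂ hp₁ hp₂)).const_mul_atTop
      (by positivity)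
  refine hlim.congr' ?_
  filter_upwards [eventually_gt_atTop 0] with x hx
  rw [saddleExponent_eq hL₁ hL₂ hp₁ hp₂ hx]

/-- Both sides of the saddle are covered by using `1 + s + s ^ 2 / 2 ≤ exp s` for the exponential
whose argument is nonnegative and `1 + s ≤ exp s` for the other. -/
lemma add_add_sq_le_mul_exp_add_mul_exp {a b : ℝ} (ha : 0 < a) (hb : 0 < b) (t : ℝ) :
    a + b + a * b * min a b / 2 * t ^ 2 ≤ b * Real.exp (a * t) + a * Real.exp (-(b * t)) := by
  rcases le_total 0 t with ht | ht
  · calc a + b + a * b * min a b / 2 * t ^ 2 ≤ a + b + a * b * a / 2 * t ^ 2 := by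
          gcongr; exact min_le_left a b
      _ = b * (1 + a * t + (a * t) ^ 2 / 2) + a * (-(b * t) + 1) := by ring
      _ ≤ _ := by
          gcongr
          · exact Real.quadratic_le_exp_of_nonneg (by positivity)
          · exact Real.add_one_le_exp _
  · calc a + b + a * b * min a b / 2 * t ^ 2 ≤ a + b + a * b * b / 2 * t ^ 2 := by
          gcongr; exact min_le_right a b
      _ = b * (a * t + 1) + a * (1 + -(b * t) + (-(b * t)) ^ 2 / 2) := by ring
      _ ≤ _ := by
          gcongr
          · exact Real.add_one_le_exp _
          · exact Real.quadratic_le_exp_of_nonneg (by nlinarith)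

lemma exponent_eq_saddleExponent_mul (hL₁ : 0 < L₁) (hL₂ : 0 < L₂) (hp₁ : 0 < p₁) (hp₂ : 0 < p₂)
    {x y t : ℝ} (hx : 0 < x) (hy : 0 < y) (ht : t = Real.log (x / y / saddle L₁ p₁ L₂ p₂ x)) :
    L₁ * (x / y) ^ p₁ + L₂ * y ^ p₂ = saddleExponent L₁ p₁ L₂ p₂ x / (p₁ + p₂) *
      (p₂ * Real.exp (p₁ * t) + p₁ * Real.exp (-(p₂ * t))) := by
  have hz := saddle_pos hL₁ hL₂ hp₁ hp₂ hx
  have hcrit := saddle_critical hL₁ hL₂ hp₁ hp₂ hx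
  have hexp : Real.exp t = x / y / saddle L₁ p₁ L₂ p₂ x := by
    rw [ht, Real.exp_log (by positivity)]
  have hz_eq : x / y = saddle L₁ p₁ L₂ p₂ x * Real.exp t := by rw [hexp]; field_simp
  have hy_eq : y = x / saddle L₁ p₁ L₂ p₂ x * Real.exp (-t) := by
    rw [Real.exp_neg, hexp]; field_simp
  have hzp : (x / y) ^ p₁ = saddle L₁ p₁ L₂ p₂ x ^ p₁ * Real.exp (p₁ * t) := by
    rw [hz_eq, Real.mul_rpow hz.le (Real.exp_pos t).le, ← Real.exp_mul, mul_comm t]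
  have hyp : y ^ p₂ = (x / saddle L₁ p₁ L₂ p₂ x) ^ p₂ * Real.exp (-(p₂ * t)) := by
    conv_lhs => rw [hy_eq]
    rw [Real.mul_rpow (by positivity) (Real.exp_pos _).le, ← Real.exp_mul, neg_mul, mul_comm t]
  rw [hzp, hyp, saddleExponent, div_mul_eq_mul_div, eq_div_iff (by positivity)]
  linear_combination (Real.exp (p₁ * t) - Real.exp (-(p₂ * t))) * hcrit

lemma exists_mul_saddleExponent_le_of_notMem_saddleWindow (hL₁ : 0 < L₁) (hL₂ : 0 < L₂)
    (hp₁ : 0 < p₁) (hp₂ : 0 < p₂) {τ : ℝ} (hτ : 0 < τ) :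
    ∃ δ, 0 < δ ∧ ∀ x y, 0 < x → 0 < y → y ∉ saddleWindow L₁ p₁ L₂ p₂ τ x →
      (1 + δ) * saddleExponent L₁ p₁ L₂ p₂ x ≤ L₁ * (x / y) ^ p₁ + L₂ * y ^ p₂ := by
  refine ⟨p₁ * p₂ * min p₁ p₂ / 2 * τ ^ 2 / (p₁ + p₂), by positivity, fun x y hx hy hxy => ?_⟩
  set t := Real.log (x / y / saddle L₁ p₁ L₂ p₂ x) with ht
  have hτt : τ ^ 2 ≤ t ^ 2 := by
    rw [← sq_abs t]
    exact pow_le_pow_left₀ hτ.le (not_lt.1 hxy) 2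
  have hE := saddleExponent_pos hL₁ hL₂ hp₁ hp₂ hx
  rw [exponent_eq_saddleExponent_mul hL₁ hL₂ hp₁ hp₂ hx hy ht]
  calc _ = saddleExponent L₁ p₁ L₂ p₂ x / (p₁ + p₂) *
        (p₁ + p₂ + p₁ * p₂ * min p₁ p₂ / 2 * τ ^ 2) := by field_simp
    _ ≤ saddleExponent L₁ p₁ L₂ p₂ x / (p₁ + p₂) *
        (p₁ + p₂ + p₁ * p₂ * min p₁ p₂ / 2 * t ^ 2) := by gcongr
    _ ≤ _ := mul_le_mul_of_nonneg_left (add_add_sq_le_mul_exp_add_mul_exp hp₁ hp₂ t)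
        (by positivity)

lemma exp_neg_mul_saddleExponent_isLittleO (hL₁ : 0 < L₁) (hL₂ : 0 < L₂) (hp₁ : 0 < p₁)
    (hp₂ : 0 < p₂) {b : ℝ} (hb : 0 < b) (q : ℝ) :
    (fun x => Real.exp (-b * saddleExponent L₁ p₁ L₂ p₂ x)) =o[atTop]
      fun x => saddle L₁ p₁ L₂ p₂ x ^ q := by
  refine ((isLittleO_exp_neg_mul_rpow_atTop hb (q / p₁)).comp_tendsto
    (tendsto_saddleExponent_atTop hL₁ hL₂ hp₁ hp₂)).trans_isBigO ?_
  refine .of_bound ((L₁ * (1 + p₁ / p₂)) ^ (q / p₁)) ?_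
  filter_upwards [eventually_gt_atTop 0] with x hx
  have hz := saddle_pos hL₁ hL₂ hp₁ hp₂ hx
  refine le_of_eq ?_
  rw [Function.comp_apply, saddleExponent_eq hL₁ hL₂ hp₁ hp₂ hx,
    Real.mul_rpow (by positivity) (by positivity), ← Real.rpow_mul hz.le,
    mul_div_cancel₀ q hp₁.ne', Real.norm_of_nonneg (by positivity),
    Real.norm_of_nonneg (by positivity)]

end Saddle

/-! ### Concentration at the saddle point -/

lemma abs_integral_sub_mul_integral_le {α : Type*} [MeasurableSpace α] {μ : Measure α}
    {F G : α → ℝ} (hF : Integrable F μ) (hG : Integrable G μ) (hF0 : 0 ≤ᵐ[μ] F) (hG0 : 0 ≤ᵐ[μ] G)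
    {W : Set α} (hW : MeasurableSet W) {D ε : ℝ} (hD : 0 ≤ D) (hε : 0 ≤ ε)
    (hFG : ∀ᵐ y ∂μ, y ∈ W → |F y - D * G y| ≤ ε * (D * G y))
    (hFW : ∫ y in Wᶜ, F y ∂μ ≤ ε * (D * ∫ y, G y ∂μ))
    (hGW : ∫ y in Wᶜ, G y ∂μ ≤ ε * ∫ y, G y ∂μ) :
    |∫ y, F y ∂μ - D * ∫ y, G y ∂μ| ≤ 3 * ε * (D * ∫ y, G y ∂μ) := by
  have hDG : Integrable (fun y => D * G y) μ := hG.const_mul D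
  have hinside : ∫ y in W, |F y - D * G y| ∂μ ≤ ε * (D * ∫ y, G y ∂μ) :=
    calc ∫ y in W, |F y - D * G y| ∂μ ≤ ∫ y in W, ε * (D * G y) ∂μ :=
          setIntegral_mono_on_ae (hF.sub hDG).abs.integrableOn (hDG.const_mul ε).integrableOn hW hFG
      _ ≤ ∫ y, ε * (D * G y) ∂μ := setIntegral_le_integral (hDG.const_mul ε) <| by
          filter_upwards [hG0] with y hy using mul_nonneg hε (mul_nonneg hD hy)
      _ = ε * (D * ∫ y, G y ∂μ) := by rw [integral_const_mul, integral_const_mul]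
  have houtside : ∫ y in Wᶜ, |F y - D * G y| ∂μ ≤ 2 * ε * (D * ∫ y, G y ∂μ) :=
    calc ∫ y in Wᶜ, |F y - D * G y| ∂μ ≤ ∫ y in Wᶜ, (F y + D * G y) ∂μ := by
          refine setIntegral_mono_ae (hF.sub hDG).abs.integrableOn (hF.add hDG).integrableOn ?_
          filter_upwards [hF0, hG0] with y hFy hGy
          have hDGy : 0 ≤ D * G y := mul_nonneg hD hGy
          simpa only [abs_of_nonneg hFy, abs_of_nonneg hDGy] using abs_sub (F y) (D * G y)
      _ = ∫ y in Wᶜ, F y ∂μ + D * ∫ y in Wᶜ, G y ∂μ := by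
          rw [integral_add hF.integrableOn hDG.integrableOn, integral_const_mul]
      _ ≤ ε * (D * ∫ y, G y ∂μ) + D * (ε * ∫ y, G y ∂μ) := by gcongr
      _ = 2 * ε * (D * ∫ y, G y ∂μ) := by ring
  calc |∫ y, F y ∂μ - D * ∫ y, G y ∂μ| = |∫ y, (F y - D * G y) ∂μ| := by
        rw [integral_sub hF hDG, integral_const_mul]
    _ ≤ ∫ y, |F y - D * G y| ∂μ := abs_integral_le_integral_abs
    _ = ∫ y in W, |F y - D * G y| ∂μ + ∫ y in Wᶜ, |F y - D * G y| ∂μ :=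
        (integral_add_compl hW (hF.sub hDG).abs).symm
    _ ≤ 3 * ε * (D * ∫ y, G y ∂μ) := by linarith

section Concentration

variable {L₁ L₂ p₁ p₂ : ℝ} {μ : Measure ℝ} [IsFiniteMeasure μ]

/-- By the choice of `c` below, multiplying and dividing by the `μ`-integrable
`exp (c L₂ y ^ p₂)` costs only part of the gap `δ` in the exponent. -/
lemma HasWeibullDecay.exists_setIntegral_compl_saddleWindow_le {f : ℝ → ℝ}
    (hf : HasWeibullDecay f L₁ p₁) (hL₁ : 0 < L₁) (hL₂ : 0 < L₂) (hp₁ : 0 < p₁) (hp₂ : 0 < p₂)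
    (hμ : ∀ᵐ y ∂μ, 0 < y) (hμ_rate : HasWeibullRate (fun y => μ.real (Set.Ioi y)) L₂ p₂) {τ : ℝ}
    (hτ : 0 < τ) :
    ∃ ρ, 1 < ρ ∧ ∃ K, ∀ x, 0 < x → ∫ y in (saddleWindow L₁ p₁ L₂ p₂ τ x)ᶜ, f (x / y) ∂μ ≤
      K * Real.exp (-(ρ * saddleExponent L₁ p₁ L₂ p₂ x)) := by
  obtain ⟨δ, hδ, hgap⟩ :=
    exists_mul_saddleExponent_le_of_notMem_saddleWindow hL₁ hL₂ hp₁ hp₂ hτ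
  obtain ⟨c, hδc, hc1⟩ : ∃ c, (1 + δ)⁻¹ < c ∧ c < 1 :=
    exists_between (inv_lt_one_of_one_lt₀ (by linarith))
  have hc0 : 0 < c := (by positivity : 0 < (1 + δ)⁻¹).trans hδc
  obtain ⟨K, hK0, hK⟩ := hf.exists_le_mul_exp hp₁ (mul_nonneg hc0.le hL₁.le)
    (mul_lt_of_lt_one_left hL₁ hc1)
  have hint : Integrable (fun y => Real.exp (c * L₂ * y ^ p₂)) μ :=
    hμ_rate.integrable_exp_mul_rpow hμ hp₂ (mul_pos hc0 hL₂) (mul_lt_of_lt_one_left hL₂ hc1)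
  refine ⟨c * (1 + δ), (inv_lt_iff_one_lt_mul₀ (by positivity)).1 hδc,
    K * ∫ y, Real.exp (c * L₂ * y ^ p₂) ∂μ, fun x hx => ?_⟩
  set B := Real.exp (-(c * (1 + δ) * saddleExponent L₁ p₁ L₂ p₂ x)) with hB
  have hpointwise : ∀ y, 0 < y → y ∉ saddleWindow L₁ p₁ L₂ p₂ τ x →
      f (x / y) ≤ K * B * Real.exp (c * L₂ * y ^ p₂) := fun y hy hyW => by
    have hexponent : -(c * L₁ * (x / y) ^ p₁) ≤
        -(c * (1 + δ) * saddleExponent L₁ p₁ L₂ p₂ x) + c * L₂ * y ^ p₂ := by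
      linarith [mul_le_mul_of_nonneg_left (hgap x y hx hy hyW) hc0.le]
    calc f (x / y) ≤ K * Real.exp (-(c * L₁ * (x / y) ^ p₁)) := hK _ (div_pos hx hy)
      _ ≤ K * (B * Real.exp (c * L₂ * y ^ p₂)) := by rw [hB, ← Real.exp_add]; gcongr
      _ = K * B * Real.exp (c * L₂ * y ^ p₂) := by ring
  calc ∫ y in (saddleWindow L₁ p₁ L₂ p₂ τ x)ᶜ, f (x / y) ∂μ
      ≤ ∫ y in (saddleWindow L₁ p₁ L₂ p₂ τ x)ᶜ, K * B * Real.exp (c * L₂ * y ^ p₂) ∂μ := by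
        refine setIntegral_mono_on_ae (hf.integrable_comp_div hL₁ hp₁ hμ hx).integrableOn
          (hint.const_mul _).integrableOn (measurableSet_saddleWindow τ x).compl ?_
        filter_upwards [hμ] with y hy using hpointwise y hy
    _ ≤ ∫ y, K * B * Real.exp (c * L₂ * y ^ p₂) ∂μ :=
        setIntegral_le_integral (hint.const_mul _) (ae_of_all _ fun y => by positivity)
    _ = K * (∫ y, Real.exp (c * L₂ * y ^ p₂) ∂μ) * B := by rw [integral_const_mul]; ring

/-- The lower bound comes from the event that the second factor exceeds its saddle value
`x / saddle L₁ p₁ L₂ p₂ x`. -/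
lemma eventually_exp_le_integral_comp_div {T : ℝ → ℝ} (hT : HasWeibullDecay T L₁ p₁)
    (hT_anti : Antitone T) (hL₁ : 0 < L₁) (hL₂ : 0 < L₂) (hp₁ : 0 < p₁) (hp₂ : 0 < p₂)
    (hμ : ∀ᵐ y ∂μ, 0 < y) (hμ_rate : HasWeibullRate (fun y => μ.real (Set.Ioi y)) L₂ p₂) {ρ : ℝ}
    (hρ : 1 < ρ) :
    ∀ᶠ x in atTop, Real.exp (-(ρ * saddleExponent L₁ p₁ L₂ p₂ x)) ≤ ∫ y, T (x / y) ∂μ := by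
  have hT_lower := hT.rate.eventually_exp_le hL₁.ne' hT.eventually_nonneg
    (lt_mul_of_one_lt_left hL₁ hρ)
  have hμ_lower := hμ_rate.eventually_exp_le hL₂.ne' (.of_forall fun _ => measureReal_nonneg)
    (lt_mul_of_one_lt_left hL₂ hρ)
  filter_upwards [(tendsto_saddle_atTop hL₁ hL₂ hp₁ hp₂).eventually hT_lower,
    (tendsto_div_saddle_atTop hL₁ hL₂ hp₁ hp₂).eventually hμ_lower, eventually_gt_atTop 0]
    with x hTx hμx hx
  have hz0 := saddle_pos hL₁ hL₂ hp₁ hp₂ hx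
  have hy0 : 0 < x / saddle L₁ p₁ L₂ p₂ x := by positivity
  have hint := hT.integrable_comp_div hL₁ hp₁ hμ hx
  calc Real.exp (-(ρ * saddleExponent L₁ p₁ L₂ p₂ x))
      = Real.exp (-(ρ * L₂ * (x / saddle L₁ p₁ L₂ p₂ x) ^ p₂)) *
        Real.exp (-(ρ * L₁ * saddle L₁ p₁ L₂ p₂ x ^ p₁)) := by
        rw [← Real.exp_add, saddleExponent]; ring_nf
    _ ≤ μ.real (Set.Ioi (x / saddle L₁ p₁ L₂ p₂ x)) * T (saddle L₁ p₁ L₂ p₂ x) :=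
        mul_le_mul hμx hTx (Real.exp_pos _).le measureReal_nonneg
    _ = ∫ _ in Set.Ioi (x / saddle L₁ p₁ L₂ p₂ x), T (saddle L₁ p₁ L₂ p₂ x) ∂μ := by
        rw [setIntegral_const, smul_eq_mul]
    _ ≤ ∫ y in Set.Ioi (x / saddle L₁ p₁ L₂ p₂ x), T (x / y) ∂μ := by
        refine setIntegral_mono_on (integrable_const _).integrableOn hint.integrableOn
          measurableSet_Ioi fun y hy => hT_anti ?_
        rw [div_le_comm₀ (hy0.trans hy) hz0]
        exact le_of_lt hy
    _ ≤ ∫ y, T (x / y) ∂μ := setIntegral_le_integral hint <| by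
        filter_upwards [hμ] with y hy using hT.nonneg _ (div_pos hx hy)

lemma setIntegral_compl_saddleWindow_isLittleO {f T : ℝ → ℝ} (hf : HasWeibullDecay f L₁ p₁)
    (hT : HasWeibullDecay T L₁ p₁) (hT_anti : Antitone T) (hL₁ : 0 < L₁) (hL₂ : 0 < L₂)
    (hp₁ : 0 < p₁) (hp₂ : 0 < p₂) (hμ : ∀ᵐ y ∂μ, 0 < y)
    (hμ_rate : HasWeibullRate (fun y => μ.real (Set.Ioi y)) L₂ p₂) {τ : ℝ} (hτ : 0 < τ) (q : ℝ) :
    (fun x => ∫ y in (saddleWindow L₁ p₁ L₂ p₂ τ x)ᶜ, f (x / y) ∂μ) =o[atTop]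
      fun x => saddle L₁ p₁ L₂ p₂ x ^ q * ∫ y, T (x / y) ∂μ := by
  obtain ⟨ρ, hρ, K, hK⟩ :=
    hf.exists_setIntegral_compl_saddleWindow_le hL₁ hL₂ hp₁ hp₂ hμ hμ_rate hτ
  obtain ⟨σ, hσ, hσρ⟩ := exists_between hρ
  have hupper : (fun x => ∫ y in (saddleWindow L₁ p₁ L₂ p₂ τ x)ᶜ, f (x / y) ∂μ) =O[atTop]
      fun x => Real.exp (-(ρ * saddleExponent L₁ p₁ L₂ p₂ x)) := by
    refine .of_bound K ?_
    filter_upwards [eventually_gt_atTop 0] with x hx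
    have hnonneg : 0 ≤ ∫ y in (saddleWindow L₁ p₁ L₂ p₂ τ x)ᶜ, f (x / y) ∂μ := by
      refine setIntegral_nonneg_of_ae ?_
      filter_upwards [hμ] with y hy using hf.nonneg _ (div_pos hx hy)
    rw [Real.norm_of_nonneg hnonneg, Real.norm_of_nonneg (Real.exp_pos _).le]
    exact hK x hx
  have hlower : (fun x => Real.exp (-(σ * saddleExponent L₁ p₁ L₂ p₂ x))) =O[atTop]
      fun x => ∫ y, T (x / y) ∂μ := by
    refine .of_bound 1 ?_
    filter_upwards [eventually_exp_le_integral_comp_div hT hT_anti hL₁ hL₂ hp₁ hp₂ hμ hμ_rate hσ]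
      with x hx
    rw [Real.norm_of_nonneg (Real.exp_pos _).le, one_mul]
    exact hx.trans (Real.le_norm_self _)
  refine hupper.trans_isLittleO (.congr_left ((exp_neg_mul_saddleExponent_isLittleO hL₁ hL₂ hp₁ hp₂
    (sub_pos.2 hσρ) q).mul_isBigO hlower) fun x => ?_)
  rw [← Real.exp_add]
  ring_nf

/-- Inside the window, `g z / (c s ^ q T z)` with `s` the saddle point is the product of
`g z / (c z ^ q T z)`, which tends to `1`, and of `(z / s) ^ q = exp (q log (z / s))`. -/
lemma exists_eventually_abs_sub_le_of_mem_saddleWindow {T g : ℝ → ℝ}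
    (hT : HasWeibullDecay T L₁ p₁) {c q : ℝ} (hc : 0 < c)
    (hg : Tendsto (fun z => g z / (c * z ^ q * T z)) atTop (𝓝 1)) (hL₁ : 0 < L₁) (hL₂ : 0 < L₂)
    (hp₁ : 0 < p₁) (hp₂ : 0 < p₂) {ε : ℝ} (hε : 0 < ε) :
    ∃ τ, 0 < τ ∧ ∀ᶠ x in atTop, ∀ y, 0 < y → y ∈ saddleWindow L₁ p₁ L₂ p₂ τ x →
      |g (x / y) - c * saddle L₁ p₁ L₂ p₂ x ^ q * T (x / y)| ≤
        ε * (c * saddle L₁ p₁ L₂ p₂ x ^ q * T (x / y)) := by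
  have hprod : Tendsto (fun w : ℝ × ℝ => g w.1 / (c * w.1 ^ q * T w.1) * Real.exp (q * w.2))
      (atTop ×ˢ 𝓝 0) (𝓝 1) := by
    have hexp : Tendsto (fun t => Real.exp (q * t)) (𝓝 0) (𝓝 1) :=
      Continuous.tendsto' (by fun_prop) _ _ (by simp)
    simpa using (hg.comp tendsto_fst).mul (hexp.comp tendsto_snd)
  obtain ⟨P, hP, Q, hQ, hPQ⟩ :=
    eventually_prod_iff.1 (hprod.eventually (Metric.closedBall_mem_nhds 1 hε))
  obtain ⟨τ, hτ, hτQ⟩ := Metric.eventually_nhds_iff.1 hQ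
  obtain ⟨R, hR⟩ := eventually_atTop.1 (hP.and (hT.rate.eventually_ne_zero hL₁.ne'))
  refine ⟨τ, hτ, ?_⟩
  filter_upwards [(tendsto_saddle_atTop hL₁ hL₂ hp₁ hp₂).eventually_ge_atTop (R * Real.exp τ),
    eventually_gt_atTop 0] with x hRx hx y hy hyW
  have hs := saddle_pos hL₁ hL₂ hp₁ hp₂ hx
  set s := saddle L₁ p₁ L₂ p₂ x
  set t := Real.log (x / y / s)
  have hz : 0 < x / y := div_pos hx hy
  have hexp : Real.exp t = x / y / s := Real.exp_log (by positivity)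
  have ht : |t| < τ := hyW
  have hRz : R ≤ x / y := by
    have : s * Real.exp (-τ) ≤ s * Real.exp t := by gcongr; exact (abs_lt.1 ht).1.le
    rw [hexp, Real.exp_neg, ← div_eq_mul_inv, mul_div_cancel₀ _ hs.ne'] at this
    exact ((le_div_iff₀ (Real.exp_pos τ)).2 hRx).trans this
  have hTz : 0 < T (x / y) := (hT.nonneg _ hz).lt_of_ne' (hR _ hRz).2
  have hratio : g (x / y) / (c * (x / y) ^ q * T (x / y)) * Real.exp (q * t) =
      g (x / y) / (c * s ^ q * T (x / y)) := by
    have : 0 < (x / y) ^ q := by positivity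
    rw [mul_comm q, Real.exp_mul, hexp, Real.div_rpow hz.le hs.le]
    field_simp
  have hclose : dist (g (x / y) / (c * (x / y) ^ q * T (x / y)) * Real.exp (q * t)) 1 ≤ ε :=
    hPQ (hR _ hRz).1 (hτQ (show dist t 0 < τ by rwa [dist_zero_right]))
  have hden : 0 < c * s ^ q * T (x / y) := by positivity
  rwa [hratio, Real.dist_eq, div_sub_one hden.ne', abs_div, abs_of_pos hden,
    div_le_iff₀ hden] at hclose

theorem tendsto_integral_comp_div_div_integral_comp_div {T g : ℝ → ℝ}
    (hT : HasWeibullDecay T L₁ p₁) (hT_anti : Antitone T) (hg : HasWeibullDecay g L₁ p₁)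
    {c q : ℝ} (hc : 0 < c) (hgT : Tendsto (fun z => g z / (c * z ^ q * T z)) atTop (𝓝 1))
    (hL₁ : 0 < L₁) (hL₂ : 0 < L₂) (hp₁ : 0 < p₁) (hp₂ : 0 < p₂) (hμ : ∀ᵐ y ∂μ, 0 < y)
    (hμ_rate : HasWeibullRate (fun y => μ.real (Set.Ioi y)) L₂ p₂) :
    Tendsto (fun x => (∫ y, g (x / y) ∂μ) /
      (c * saddle L₁ p₁ L₂ p₂ x ^ q * ∫ y, T (x / y) ∂μ)) atTop (𝓝 1) := by
  rw [Metric.tendsto_nhds]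
  intro r hr
  obtain ⟨ε, hε, hεr⟩ : ∃ ε, 0 < ε ∧ 3 * ε < r := ⟨r / 4, by positivity, by linarith⟩
  obtain ⟨τ, hτ, hwindow⟩ :=
    exists_eventually_abs_sub_le_of_mem_saddleWindow hT hc hgT hL₁ hL₂ hp₁ hp₂ hε
  have hgW := (setIntegral_compl_saddleWindow_isLittleO hg hT hT_anti hL₁ hL₂ hp₁ hp₂ hμ hμ_rate hτ
    q).bound (mul_pos hε hc)
  have hTW := (setIntegral_compl_saddleWindow_isLittleO hT hT hT_anti hL₁ hL₂ hp₁ hp₂ hμ hμ_rate hτ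
    0).bound hε
  filter_upwards [hwindow, hgW, hTW, eventually_gt_atTop 0,
    eventually_exp_le_integral_comp_div hT hT_anti hL₁ hL₂ hp₁ hp₂ hμ hμ_rate one_lt_two]
    with x hwindow hgW hTW hx hI
  have hs : 0 < saddle L₁ p₁ L₂ p₂ x := saddle_pos hL₁ hL₂ hp₁ hp₂ hx
  have hI0 : 0 < ∫ y, T (x / y) ∂μ := (Real.exp_pos _).trans_le hI
  have hden : 0 < c * saddle L₁ p₁ L₂ p₂ x ^ q * ∫ y, T (x / y) ∂μ := by positivity
  have hgW' : ∫ y in (saddleWindow L₁ p₁ L₂ p₂ τ x)ᶜ, g (x / y) ∂μ ≤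
      ε * (c * saddle L₁ p₁ L₂ p₂ x ^ q * ∫ y, T (x / y) ∂μ) :=
    (Real.le_norm_self _).trans <| hgW.trans_eq <| by
      rw [Real.norm_of_nonneg (by positivity)]; ring
  have hTW' : ∫ y in (saddleWindow L₁ p₁ L₂ p₂ τ x)ᶜ, T (x / y) ∂μ ≤ ε * ∫ y, T (x / y) ∂μ :=
    (Real.le_norm_self _).trans <| hTW.trans_eq <| by
      rw [Real.rpow_zero, one_mul, Real.norm_of_nonneg hI0.le]
  have hcompare := abs_integral_sub_mul_integral_le (hg.integrable_comp_div hL₁ hp₁ hμ hx)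
    (hT.integrable_comp_div hL₁ hp₁ hμ hx)
    (hμ.mono fun y hy => hg.nonneg _ (div_pos hx hy))
    (hμ.mono fun y hy => hT.nonneg _ (div_pos hx hy))
    (measurableSet_saddleWindow τ x) (by positivity) hε.le (hμ.mono hwindow)
    hgW' hTW'
  rw [Real.dist_eq, div_sub_one hden.ne', abs_div, abs_of_pos hden]
  exact ((div_le_iff₀ hden).2 hcompare).trans_lt hεr

end Concentration

/-! ### Densities of products -/

lemma mconv_volume_withDensity {μ : Measure ℝ} [SFinite μ] (hμ : ∀ᵐ y ∂μ, y ≠ 0)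
    {f : ℝ → ℝ≥0∞} (hf : Measurable f) :
    μ ∗ₘ volume.withDensity f =
      volume.withDensity fun x => ∫⁻ y, ENNReal.ofReal |y⁻¹| * f (x / y) ∂μ := by
  refine Measure.ext_of_lintegral _ fun φ hφ => ?_
  have hscale : ∀ y : ℝ, y ≠ 0 → ∫⁻ z, φ (y * z) ∂volume.withDensity f =
      ∫⁻ x, ENNReal.ofReal |y⁻¹| * f (x / y) * φ x := fun y hy => by
    calc ∫⁻ z, φ (y * z) ∂volume.withDensity f
        = ∫⁻ z, f (y * z / y) * φ (y * z) := by
          rw [lintegral_withDensity_eq_lintegral_mul _ hf (by fun_prop)]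
          simp only [Pi.mul_apply, mul_div_cancel_left₀ _ hy]
      _ = ∫⁻ x, f (x / y) * φ x ∂Measure.map (y * ·) volume :=
          (lintegral_map (f := fun x => f (x / y) * φ x) (by fun_prop) (by fun_prop)).symm
      _ = ∫⁻ x, ENNReal.ofReal |y⁻¹| * f (x / y) * φ x := by
          rw [Real.map_volume_mul_left hy, lintegral_smul_measure, smul_eq_mul,
            ← lintegral_const_mul _ (by fun_prop)]
          simp only [mul_assoc]
  calc ∫⁻ x, φ x ∂(μ ∗ₘ volume.withDensity f)
      = ∫⁻ y, ∫⁻ z, φ (y * z) ∂volume.withDensity f ∂μ := Measure.lintegral_mconv hφ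
    _ = ∫⁻ y, (∫⁻ x, ENNReal.ofReal |y⁻¹| * f (x / y) * φ x) ∂μ :=
        lintegral_congr_ae (hμ.mono hscale)
    _ = ∫⁻ x, ∫⁻ y, ENNReal.ofReal |y⁻¹| * f (x / y) * φ x ∂μ :=
        lintegral_lintegral_swap (by fun_prop)
    _ = ∫⁻ x, φ x ∂volume.withDensity fun x => ∫⁻ y, ENNReal.ofReal |y⁻¹| * f (x / y) ∂μ := by
        rw [lintegral_withDensity_eq_lintegral_mul _
          (Measurable.lintegral_prod_right (by fun_prop)) hφ]
        exact lintegral_congr fun x => lintegral_mul_const _ (by fun_prop)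

lemma withDensity_ofReal_toReal {α : Type*} [MeasurableSpace α] {μ : Measure α} {F : α → ℝ≥0∞}
    (hF : Measurable F) [IsFiniteMeasure (μ.withDensity F)] :
    μ.withDensity (fun x => ENNReal.ofReal (F x).toReal) = μ.withDensity F := by
  refine withDensity_congr_ae ?_
  have hfinite : ∫⁻ x, F x ∂μ ≠ ⊤ := by
    rw [← setLIntegral_univ, ← withDensity_apply _ .univ]
    exact measure_ne_top _ _
  filter_upwards [ae_lt_top hF hfinite] with x hx using ENNReal.ofReal_toReal hx.ne

lemma toReal_lintegral_inv_mul_comp_div {μ : Measure ℝ} (hμ : ∀ᵐ y ∂μ, 0 < y) {f : ℝ → ℝ}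
    (hf : Measurable f) (hf0 : ∀ z, 0 ≤ f z) {x : ℝ} (hx : 0 < x) :
    (∫⁻ y, ENNReal.ofReal |y⁻¹| * ENNReal.ofReal (f (x / y)) ∂μ).toReal =
      x⁻¹ * ∫ y, x / y * f (x / y) ∂μ := by
  rw [← integral_const_mul, integral_eq_lintegral_of_nonneg_ae]
  · refine congrArg ENNReal.toReal (lintegral_congr_ae ?_)
    filter_upwards [hμ] with y hy
    rw [← ENNReal.ofReal_mul (abs_nonneg _), abs_of_pos (inv_pos.2 hy)]
    congr 1
    field_simp
  · filter_upwards [hμ] with y hy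
    have := hf0 (x / y)
    positivity
  · exact Measurable.aestronglyMeasurable (by fun_prop)

lemma measureReal_mconv_Ioi {μ ν : Measure ℝ} [IsFiniteMeasure ν] (hμ : ∀ᵐ y ∂μ, 0 < y) (x : ℝ) :
    (μ ∗ₘ ν).real (Set.Ioi x) = ∫ y, ν.real (Set.Ioi (x / y)) ∂μ := by
  have hmeas : Measurable fun y => ν (Set.Ioi (x / y)) :=
    (Antitone.measurable fun _ _ hab => measure_mono (Set.Ioi_subset_Ioi hab)).comp
      (measurable_const.div measurable_id)
  simp only [measureReal_def]
  rw [integral_toReal hmeas.aemeasurable (ae_of_all _ fun y => measure_lt_top _ _), Measure.mconv,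
    Measure.map_apply measurable_mul measurableSet_Ioi,
    Measure.prod_apply (measurable_mul measurableSet_Ioi)]
  refine congrArg ENNReal.toReal (lintegral_congr_ae ?_)
  filter_upwards [hμ] with y hy
  refine congrArg ν (Set.ext fun z => ?_)
  exact (div_lt_iff₀' hy).symm

lemma exists_measurable_le_tendsto {r : ℝ → ℝ} (hr : ∀ x, 0 ≤ r x) {a : ℝ}
    (ha : Tendsto r atTop (𝓝 a)) :
    ∃ k : ℝ → ℝ, Measurable k ∧ (∀ x, 0 ≤ k x) ∧ (∀ x, k x ≤ r x) ∧ Tendsto k atTop (𝓝 a) := by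
  have hbdd : ∀ x : ℝ, BddBelow (Set.range fun y : Set.Ici x => r y) := fun x =>
    ⟨0, by rintro _ ⟨y, rfl⟩; exact hr _⟩
  have hle : ∀ x : ℝ, (⨅ y : Set.Ici x, r y) ≤ r x := fun x =>
    ciInf_le (hbdd x) ⟨x, Set.self_mem_Ici⟩
  refine ⟨fun x => ⨅ y : Set.Ici x, r y, Monotone.measurable fun x x' hx => ?_,
    fun x => Real.iInf_nonneg fun _ => hr _, hle, tendsto_order.2 ⟨fun b hb => ?_, fun b hb => ?_⟩⟩
  · exact le_ciInf fun y => ciInf_le (hbdd x) ⟨y, Set.mem_Ici.2 (hx.trans y.2)⟩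
  · obtain ⟨c, hbc, hca⟩ := exists_between hb
    obtain ⟨R, hR⟩ := eventually_atTop.1 (ha.eventually_const_lt hca)
    filter_upwards [eventually_ge_atTop R] with x hx
    exact hbc.trans_le (le_ciInf fun y => (hR y (hx.trans y.2)).le)
  · exact (ha.eventually_lt_const hb).mono fun x hx => (hle x).trans_lt hx

/-- The density `h` need not be measurable: a measurable version of it is kept from being too small
at infinity by a measurable minorant of `h` which is still equivalent to `φ`. -/
lemma exists_measurable_density_tendsto_div {μ : Measure ℝ} [SFinite μ] {h φ : ℝ → ℝ}
    (hh : ∀ x, 0 ≤ h x) (hφ : Measurable φ) (hlim : Tendsto (fun x => h x / φ x) atTop (𝓝 1)) :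
    ∃ f : ℝ → ℝ, Measurable f ∧ (∀ x, 0 ≤ f x) ∧ (∀ x, f x ≤ h x) ∧
      μ.withDensity (fun x => ENNReal.ofReal (f x)) =
        μ.withDensity (fun x => ENNReal.ofReal (h x)) ∧
      Tendsto (fun x => f x / φ x) atTop (𝓝 1) := by
  obtain ⟨g, hg, hgh, hg_eq⟩ := exists_measurable_le_withDensity_eq μ fun x => ENNReal.ofReal (h x)
  have habs : Tendsto (fun x => |h x / φ x|) atTop (𝓝 1) := by simpa using hlim.abs
  obtain ⟨k, hk, hk0, hkh, hk1⟩ := exists_measurable_le_tendsto (fun x => abs_nonneg _) habs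
  have hminorant : ∀ x, |φ x| * k x ≤ h x := fun x => by
    refine (mul_le_mul_of_nonneg_left (hkh x) (abs_nonneg _)).trans ?_
    rw [abs_div, abs_of_nonneg (hh x), mul_div_left_comm]
    exact mul_le_of_le_one_right (hh x) (div_self_le_one _)
  have hfh : ∀ x, max (g x).toReal (|φ x| * k x) ≤ h x := fun x =>
    max_le (ENNReal.toReal_le_of_le_ofReal (hh x) (hgh x)) (hminorant x)
  refine ⟨fun x => max (g x).toReal (|φ x| * k x), by fun_prop,
    fun x => ENNReal.toReal_nonneg.trans (le_max_left _ _), hfh, le_antisymm ?_ ?_, ?_⟩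
  · exact withDensity_mono (ae_of_all _ fun x => ENNReal.ofReal_le_ofReal (hfh x))
  · rw [← hg_eq]
    refine withDensity_mono (ae_of_all _ fun x => ?_)
    rw [← ENNReal.ofReal_toReal ((hgh x).trans_lt ENNReal.ofReal_lt_top).ne]
    exact ENNReal.ofReal_le_ofReal (le_max_left _ _)
  · have hφ_pos : ∀ᶠ x in atTop, 0 < φ x :=
      (hlim.eventually_const_lt one_pos).mono fun x hx =>
        lt_of_not_ge fun hφx => hx.not_ge (div_nonpos_of_nonneg_of_nonpos (hh x) hφx)
    refine tendsto_of_tendsto_of_tendsto_of_le_of_le' hk1 hlim ?_ ?_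
    · filter_upwards [hφ_pos] with x hx
      rw [le_div_iff₀ hx, mul_comm]
      exact (mul_le_mul_of_nonneg_right (le_abs_self _) (hk0 x)).trans (le_max_right _ _)
    · filter_upwards [hφ_pos] with x hx using (div_le_div_iff_of_pos_right hx).2 (hfh x)

theorem exists_density_mconv_tendsto {μ ν : Measure ℝ} [IsFiniteMeasure μ] [IsFiniteMeasure ν]
    {L₁ L₂ p₁ p₂ : ℝ} (hL₁ : 0 < L₁) (hL₂ : 0 < L₂) (hp₁ : 0 < p₁) (hp₂ : 0 < p₂)
    (hμ : ∀ᵐ y ∂μ, 0 < y) (hν_rate : HasWeibullRate (fun x => ν.real (Set.Ioi x)) L₁ p₁)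
    (hμ_rate : HasWeibullRate (fun x => μ.real (Set.Ioi x)) L₂ p₂)
    {f : ℝ → ℝ} (hf : Measurable f) (hf0 : ∀ z, 0 ≤ f z) {M : ℝ} (hM : ∀ z, f z ≤ M)
    (hν : ν = volume.withDensity fun z => ENNReal.ofReal (f z)) {c q : ℝ} (hc : 0 < c)
    (hlim : Tendsto (fun z => f z / (c * z ^ (q - 1) * ν.real (Set.Ioi z))) atTop (𝓝 1)) :
    ∃ h : ℝ → ℝ, (∀ x, 0 ≤ h x) ∧
      μ ∗ₘ ν = volume.withDensity (fun x => ENNReal.ofReal (h x)) ∧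
      Tendsto (fun x => h x / (x⁻¹ * (c * saddle L₁ p₁ L₂ p₂ x ^ q * (μ ∗ₘ ν).real (Set.Ioi x))))
        atTop (𝓝 1) := by
  have hconv : μ ∗ₘ ν = volume.withDensity
      fun x => ∫⁻ y, ENNReal.ofReal |y⁻¹| * ENNReal.ofReal (f (x / y)) ∂μ := by
    rw [hν, mconv_volume_withDensity (hμ.mono fun y hy => hy.ne') (by fun_prop)]
  have hg : Tendsto (fun z => z * f z / (c * z ^ q * ν.real (Set.Ioi z))) atTop (𝓝 1) := by
    refine hlim.congr' ?_
    filter_upwards [eventually_gt_atTop 0] with z hz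
    rw [Real.rpow_sub_one hz.ne']
    field_simp
  have hg_decay : HasWeibullDecay (fun z => z * f z) L₁ p₁ :=
    { measurable := by fun_prop
      nonneg := fun z hz => mul_nonneg hz.le (hf0 z)
      bddAbove := fun R => ⟨R * M, by
        rintro _ ⟨z, hz, rfl⟩
        exact mul_le_mul hz.2 (hM z) (hf0 z) (hz.1.le.trans hz.2)⟩
      rate := hν_rate.of_tendsto_div hL₁.ne' hp₁ hc.ne' hg }
  have : IsFiniteMeasure (volume.withDensity
      fun x => ∫⁻ y, ENNReal.ofReal |y⁻¹| * ENNReal.ofReal (f (x / y)) ∂μ) := hconv ▸ inferInstance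
  refine ⟨_, fun x => ENNReal.toReal_nonneg, hconv.trans (withDensity_ofReal_toReal
    (Measurable.lintegral_prod_right (by fun_prop))).symm, ?_⟩
  refine (tendsto_integral_comp_div_div_integral_comp_div hν_rate.hasWeibullDecay_measureReal_Ioi
    (antitone_measureReal_Ioi ν) hg_decay hc hg hL₁ hL₂ hp₁ hp₂ hμ hμ_rate).congr' ?_
  filter_upwards [eventually_gt_atTop 0] with x hx
  rw [measureReal_mconv_Ioi hμ, toReal_lintegral_inv_mul_comp_div hμ hf hf0 hx,
    mul_div_mul_left _ _ (inv_ne_zero hx.ne')]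

theorem product_density_asymptotics_general {Ω : Type*} [MeasurableSpace Ω] {P : Measure Ω}
    [IsFiniteMeasure P] {X₁ X₂ : Ω → ℝ} (hX₁ : Measurable X₁) (hX₂ : Measurable X₂)
    (hpos₂ : ∀ᵐ ω ∂P, 0 < X₂ ω) (hindep : IndepFun X₁ X₂ P) {L₁ L₂ p₁ p₂ : ℝ}
    (hL₁ : 0 < L₁) (hL₂ : 0 < L₂) (hp₁ : 0 < p₁) (hp₂ : 0 < p₂)
    (hrate₁ : HasWeibullRate (fun x => P.real {ω | X₁ ω > x}) L₁ p₁)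
    (hrate₂ : HasWeibullRate (fun x => P.real {ω | X₂ ω > x}) L₂ p₂)
    {A : ℝ} (hA : A = ((p₁ * L₁) / (p₂ * L₂)) ^ (1 / (p₁ + p₂)))
    {h₁ : ℝ → ℝ} (h₁nonneg : ∀ x, 0 ≤ h₁ x)
    (h₁dens : P.map X₁ = volume.withDensity (fun x => ENNReal.ofReal (h₁ x)))
    (h₁bdd : ∃ M : ℝ, ∀ x, h₁ x ≤ M)
    (h₁asym : Tendsto (fun x => h₁ x / (L₁ * p₁ * x ^ (p₁ - 1) * P.real {ω | X₁ ω > x}))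
      atTop (𝓝 1)) :
    ∃ h : ℝ → ℝ, (∀ x, 0 ≤ h x) ∧
      P.map (fun ω => X₁ ω * X₂ ω) = volume.withDensity (fun x => ENNReal.ofReal (h x)) ∧
      Tendsto (fun x => h x / (L₁ * p₁ * A ^ (-p₁) * x ^ (p₁ * p₂ / (p₁ + p₂) - 1) *
        P.real {ω | X₁ ω * X₂ ω > x})) atTop (𝓝 1) := by
  have htail : ∀ {X : Ω → ℝ}, Measurable X → ∀ x,
      P.real {ω | X ω > x} = (P.map X).real (Set.Ioi x) := fun hX x =>
    (map_measureReal_apply hX measurableSet_Ioi).symm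
  have hlaw : P.map (fun ω => X₁ ω * X₂ ω) = P.map X₂ ∗ₘ P.map X₁ :=
    (hindep.map_mul_eq_map_mconv_map hX₁ hX₂).trans (Measure.mconv_comm _ _)
  simp only [htail hX₁, htail hX₂] at hrate₁ hrate₂ h₁asym
  simp only [htail (X := fun ω => X₁ ω * X₂ ω) (hX₁.mul hX₂), hlaw]
  obtain ⟨M, hM⟩ := h₁bdd
  have hT_meas := (antitone_measureReal_Ioi (P.map X₁)).measurable
  obtain ⟨f, hf, hf0, hfh₁, hf_dens, hf_asym⟩ := exists_measurable_density_tendsto_div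
    (μ := volume) h₁nonneg (by fun_prop) h₁asym
  obtain ⟨h, hh0, hh_dens, hh_asym⟩ := exists_density_mconv_tendsto hL₁ hL₂ hp₁ hp₂
    ((ae_map_iff hX₂.aemeasurable measurableSet_Ioi).2 hpos₂) hrate₁ hrate₂ hf hf0
    (fun z => (hfh₁ z).trans (hM z)) (h₁dens.trans hf_dens.symm) (mul_pos hL₁ hp₁) hf_asym
  refine ⟨h, hh0, hh_dens, hh_asym.congr' ?_⟩
  filter_upwards [eventually_gt_atTop 0] with x hx
  rw [saddle_rpow hL₁ hL₂ hp₁ hp₂ hx, ← hA, Real.rpow_sub_one hx.ne']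
  ring_nf

/-- density asymptotics of a product of two independent random variables
with Weibull-type tails; Lemma `lem0`, equation (resDens). -/
theorem product_density_asymptotics
    {Ω : Type*} [MeasureSpace Ω] [IsProbabilityMeasure (ℙ : Measure Ω)]
    (X₁ X₂ : Ω → ℝ) (hX₁ : Measurable X₁) (hX₂ : Measurable X₂)
    (hpos₁ : ∀ᵐ ω ∂ℙ, 0 < X₁ ω) (hpos₂ : ∀ᵐ ω ∂ℙ, 0 < X₂ ω)
    (hindep : IndepFun X₁ X₂ ℙ)
    (C₁ C₂ L₁ L₂ p₁ p₂ : ℝ) (α₁ α₂ : ℝ)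
    (hC₁ : 0 < C₁) (hC₂ : 0 < C₂) (hL₁ : 0 < L₁) (hL₂ : 0 < L₂)
    (hp₁ : 0 < p₁) (hp₂ : 0 < p₂)
    (htail₁ : Tendsto (fun x : ℝ =>
        (ℙ {ω | X₁ ω > x}).toReal / (C₁ * x ^ α₁ * Real.exp (-(L₁ * x ^ p₁))))
      atTop (nhds 1))
    (htail₂ : Tendsto (fun x : ℝ =>
        (ℙ {ω | X₂ ω > x}).toReal / (C₂ * x ^ α₂ * Real.exp (-(L₂ * x ^ p₂))))
      atTop (nhds 1))
    (A : ℝ) (hA : A = ((p₁ * L₁) / (p₂ * L₂)) ^ (1 / (p₁ + p₂)))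
    -- `X₁` has a bounded, ultimately decreasing density `h₁`
    (h₁ : ℝ → ℝ) (h₁nonneg : ∀ x, 0 ≤ h₁ x)
    (h₁dens : Measure.map X₁ ℙ
      = MeasureTheory.volume.withDensity (fun x => ENNReal.ofReal (h₁ x)))
    (h₁bdd : ∃ M : ℝ, ∀ x, h₁ x ≤ M)
    (h₁dec : ∃ x₀ : ℝ, AntitoneOn h₁ (Set.Ici x₀))
    (h₁asym : Tendsto (fun x : ℝ =>
        h₁ x / (L₁ * p₁ * x ^ (p₁ - 1) * (ℙ {ω | X₁ ω > x}).toReal))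
      atTop (nhds 1)) :
    -- then `X₁ · X₂` has a density `h` with the stated asymptotic behaviour
    ∃ h : ℝ → ℝ, (∀ x, 0 ≤ h x) ∧
      Measure.map (fun ω => X₁ ω * X₂ ω) ℙ
        = MeasureTheory.volume.withDensity (fun x => ENNReal.ofReal (h x)) ∧
      Tendsto (fun x : ℝ =>
          h x / (L₁ * p₁ * A ^ (-p₁) * x ^ (p₁ * p₂ / (p₁ + p₂) - 1) *
            (ℙ {ω | X₁ ω * X₂ ω > x}).toReal))
        atTop (nhds 1) :=
  product_density_asymptotics_general hX₁ hX₂ hpos₂ hindep hL₁ hL₂ hp₁ hp₂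
    ((hasWeibullRate_exp L₁ p₁).of_tendsto_div hL₁.ne' hp₁ hC₁.ne' htail₁)
    ((hasWeibullRate_exp L₂ p₂).of_tendsto_div hL₂.ne' hp₂ hC₂.ne' htail₂)
    hA h₁nonneg h₁dens h₁bdd h₁asym
end

section
/- Let Y be a real random variable such that P(Y > u) = (1 + o(1))·K·u^β·e^{−c·u} as u → ∞, for constants K, c > 0 and β ∈ ℝ, and suppose Y possesses a density h such that P(Y > u) = (1 + o(1))·h(u)/c as u → ∞. Define a_n = c^{−1}, b_n = c^{−1}·( ln n + β·ln(c^{−1}·ln n) + ln K ), and let ν_n be the law of X_n = (Y − b_n)/a_n. Then for all sufficiently large r > 0 and every p > 0, limsup_{n→∞} n·∫_{[−b_n/(2·a_n), −r]} e^{−x²/p} dν_n(x) < ∞. -/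
/-!
Put `l = c⁻¹ log n`, so that `b_n = l + c⁻¹ (β log l + log K)` and `n e^{-c b_n} = l^{-β} / K`.
Since `b_n / l → 1`, every `u` between `b_n / 2` and `b_n` satisfies `1/4 ≤ u / l ≤ 4` once `n` is
large. Writing `u = b_n + c⁻¹ t`, the tail estimate therefore gives `n P(X_n ≥ t) ≤ A e^{-t}` with
the same `A` for all `t ∈ [-b_n / (2 a_n), 0]`: the polynomial factors cancel up to `4 ^ |β|`.
Estimates of `P(Y > u)` carry over to `P(Y ≥ u)` because their right-hand sides are continuous.

On the negative axis `e^{-x²/p} ≤ e^p e^{2x}`, and the exponent `2` beats the growth rate `1` of the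
tail: by the layer cake formula the integral is at most `e^p (A / n) ∫₀¹ s^{-1/2} ds`, whatever the
length of the interval.
-/

open MeasureTheory ProbabilityTheory Filter

open Asymptotics Set Topology

section ExponentialTail

variable {ν : Measure ℝ} {A L : ℝ}

lemma setIntegral_Ioc_zero_one_rpow {s : ℝ} (hs : -1 < s) :
    ∫ x in Ioc (0 : ℝ) 1, x ^ s = (s + 1)⁻¹ := by
  rw [← intervalIntegral.integral_of_le zero_le_one, integral_rpow (.inl hs), Real.one_rpow,
    Real.zero_rpow (by linarith), sub_zero, one_div]

lemma le_exp_mul_min_zero_iff {α s x : ℝ} (hα : 0 < α) (hs : s ∈ Ioc 0 1) :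
    s ≤ Real.exp (α * min x 0) ↔ Real.log s / α ≤ x := by
  have hlog : Real.log s / α ≤ 0 :=
    div_nonpos_of_nonpos_of_nonneg (Real.log_nonpos hs.1.le hs.2) hα.le
  rw [← Real.log_le_iff_le_exp hs.1, ← div_le_iff₀' hα, le_min_iff, and_iff_left hlog]

lemma measureReal_restrict_Ici_le_rpow {lam α s : ℝ} (hL : L ≤ 0) (hlam : 0 ≤ lam) (hα : 0 < α)
    (htail : ∀ t ∈ Icc L 0, ν.real (Ici t) ≤ A * Real.exp (-(lam * t))) (hs : s ∈ Ioc 0 1) :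
    (ν.restrict (Ici L)).real {x | s ≤ Real.exp (α * min x 0)} ≤ A * s ^ (-(lam / α)) := by
  have hA : 0 ≤ A := by
    simpa using measureReal_nonneg.trans (htail 0 (right_mem_Icc.2 hL))
  have hlog : Real.log s / α ≤ 0 :=
    div_nonpos_of_nonpos_of_nonneg (Real.log_nonpos hs.1.le hs.2) hα.le
  have hset : {x | s ≤ Real.exp (α * min x 0)} = Ici (Real.log s / α) :=
    ext fun _ => le_exp_mul_min_zero_iff hα hs
  calc (ν.restrict (Ici L)).real {x | s ≤ Real.exp (α * min x 0)}
      = ν.real (Ici (max (Real.log s / α) L)) := by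
        rw [hset, measureReal_restrict_apply measurableSet_Ici, Ici_inter_Ici]
    _ ≤ A * Real.exp (-(lam * max (Real.log s / α) L)) :=
        htail _ ⟨le_max_right _ _, max_le hlog hL⟩
    _ ≤ A * Real.exp (-(lam * (Real.log s / α))) := by
        gcongr
        exact le_max_left _ _
    _ = A * s ^ (-(lam / α)) := by
        rw [Real.rpow_def_of_pos hs.1]
        ring_nf

variable [IsFiniteMeasure ν]

lemma integrable_exp_mul_min_zero {α : ℝ} (hα : 0 ≤ α) :
    Integrable (fun x => Real.exp (α * min x 0)) ν := by
  refine .of_bound (by fun_prop) 1 (.of_forall fun x => ?_)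
  rw [Real.norm_eq_abs, Real.abs_exp, Real.exp_le_one_iff]
  exact mul_nonpos_of_nonneg_of_nonpos hα (min_le_right x 0)

lemma setIntegral_exp_mul_min_zero_le {lam α : ℝ} (hL : L ≤ 0) (hlam : 0 ≤ lam) (hlamα : lam < α)
    (htail : ∀ t ∈ Icc L 0, ν.real (Ici t) ≤ A * Real.exp (-(lam * t))) :
    ∫ x in Ici L, Real.exp (α * min x 0) ∂ν ≤ A * (1 - lam / α)⁻¹ := by
  have hα : 0 < α := hlam.trans_lt hlamα
  have hexponent : -1 < -(lam / α) := neg_lt_neg ((div_lt_one hα).2 hlamα)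
  have hle_one (x : ℝ) : Real.exp (α * min x 0) ≤ 1 :=
    Real.exp_le_one_iff.2 (mul_nonpos_of_nonneg_of_nonpos hα.le (min_le_right x 0))
  have hint : IntegrableOn (fun s : ℝ => A * s ^ (-(lam / α))) (Ioc 0 1) :=
    ((intervalIntegral.intervalIntegrable_rpow' hexponent).1).const_mul A
  calc ∫ x in Ici L, Real.exp (α * min x 0) ∂ν
      = ∫ s in Ioc 0 1, (ν.restrict (Ici L)).real {x | s ≤ Real.exp (α * min x 0)} :=
        (integrable_exp_mul_min_zero hα.le).integral_eq_integral_Ioc_meas_le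
          (.of_forall fun x => (Real.exp_pos _).le) (.of_forall hle_one)
    _ ≤ ∫ s in Ioc (0 : ℝ) 1, A * s ^ (-(lam / α)) :=
        integral_mono_of_nonneg (.of_forall fun s => measureReal_nonneg) hint
          (ae_restrict_of_forall_mem measurableSet_Ioc fun s hs =>
            measureReal_restrict_Ici_le_rpow hL hlam hα htail hs)
    _ = A * (1 - lam / α)⁻¹ := by
        rw [integral_const_mul, setIntegral_Ioc_zero_one_rpow hexponent, neg_add_eq_sub]

lemma exp_neg_sq_div_le {p : ℝ} (hp : 0 < p) (x : ℝ) :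
    Real.exp (-(x ^ 2) / p) ≤ Real.exp p * Real.exp (2 * min x 0) := by
  rw [← Real.exp_add, Real.exp_le_exp, div_le_iff₀ hp]
  rcases min_cases x 0 with ⟨hmin, -⟩ | ⟨hmin, -⟩ <;> rw [hmin]
  · linear_combination sq_nonneg (x + p)
  · linear_combination sq_nonneg x + sq_nonneg p

lemma setIntegral_exp_neg_sq_div_le {p R : ℝ} (hp : 0 < p) (hL : L ≤ 0)
    (htail : ∀ t ∈ Icc L 0, ν.real (Ici t) ≤ A * Real.exp (-t)) :
    ∫ x in Icc L R, Real.exp (-(x ^ 2) / p) ∂ν ≤ Real.exp p * (A * 2) := by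
  have hint : Integrable (fun x => Real.exp p * Real.exp (2 * min x 0)) ν :=
    (integrable_exp_mul_min_zero zero_le_two).const_mul _
  calc ∫ x in Icc L R, Real.exp (-(x ^ 2) / p) ∂ν
      ≤ ∫ x in Icc L R, Real.exp p * Real.exp (2 * min x 0) ∂ν :=
        integral_mono_of_nonneg (.of_forall fun x => (Real.exp_pos _).le) hint.integrableOn
          (.of_forall (exp_neg_sq_div_le hp))
    _ ≤ ∫ x in Ici L, Real.exp p * Real.exp (2 * min x 0) ∂ν :=
        setIntegral_mono_set hint.integrableOn (.of_forall fun x => by positivity)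
          Icc_subset_Ici_self.eventuallyLE
    _ = Real.exp p * ∫ x in Ici L, Real.exp (2 * min x 0) ∂ν := integral_const_mul _ _
    _ ≤ Real.exp p * (A * (1 - 1 / 2)⁻¹) := by
        gcongr
        exact setIntegral_exp_mul_min_zero_le hL zero_le_one one_lt_two (by simpa using htail)
    _ = Real.exp p * (A * 2) := by norm_num

end ExponentialTail

lemma isBigO_of_tendsto_div_const_mul {α : Type*} {l : Filter α} {f g : α → ℝ} {K : ℝ}
    (h : Tendsto (fun x => f x / (K * g x)) l (𝓝 1)) : f =O[l] g :=
  (isEquivalent_of_tendsto_one h).isBigO.trans (isBigO_const_mul_self K g l)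

lemma isBigO_measureReal_Ici {ν : Measure ℝ} [IsFiniteMeasure ν] {g : ℝ → ℝ}
    (hg : ∀ᶠ u in atTop, ContinuousAt g u) (h : (fun u => ν.real (Ioi u)) =O[atTop] g) :
    (fun u => ν.real (Ici u)) =O[atTop] g := by
  obtain ⟨C, hC⟩ := h.bound
  obtain ⟨u₀, hu₀⟩ := eventually_atTop.1 hC
  refine .of_bound C ?_
  filter_upwards [hg, eventually_gt_atTop u₀] with u hgu hu
  have hlim : Tendsto (fun s => C * ‖g s‖) (𝓝[<] u) (𝓝 (C * ‖g u‖)) :=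
    (hgu.norm.const_mul C).mono_left nhdsWithin_le_nhds
  refine ge_of_tendsto hlim ?_
  filter_upwards [Ioo_mem_nhdsLT hu] with s hs
  calc ‖ν.real (Ici u)‖ ≤ ‖ν.real (Ioi s)‖ := by
        rw [Real.norm_of_nonneg measureReal_nonneg, Real.norm_of_nonneg measureReal_nonneg]
        exact measureReal_mono (Ici_subset_Ioi.2 hs.2)
    _ ≤ C * ‖g s‖ := hu₀ s hs.1.le

lemma map_sub_div_measureReal_Ici {Ω : Type*} [MeasurableSpace Ω] {μ : Measure Ω} {Y : Ω → ℝ}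
    (hY : AEMeasurable Y μ) {a : ℝ} (ha : 0 < a) (b t : ℝ) :
    (μ.map fun ω => (Y ω - b) / a).real (Ici t) = (μ.map Y).real (Ici (b + a * t)) := by
  have hpreimage : (fun y : ℝ => (y - b) / a) ⁻¹' Ici t = Ici (b + a * t) := by
    ext y
    simp only [mem_preimage, mem_Ici, le_div_iff₀' ha, le_sub_iff_add_le']
  have hcomp := AEMeasurable.map_map_of_aemeasurable
    (g := fun y : ℝ => (y - b) / a) (by fun_prop) hY
  rw [← hpreimage, ← map_measureReal_apply (by fun_prop) measurableSet_Ici, hcomp]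
  rfl

lemma rpow_le_rpow_abs_of_mem_Icc {x M : ℝ} (hM : 0 < M) (hx : x ∈ Icc M⁻¹ M) (β : ℝ) :
    x ^ β ≤ M ^ |β| := by
  have hx0 : 0 < x := (inv_pos.2 hM).trans_le hx.1
  rcases le_total 0 β with hβ | hβ
  · rw [abs_of_nonneg hβ]
    exact Real.rpow_le_rpow hx0.le hx.2 hβ
  · calc x ^ β ≤ M⁻¹ ^ β := Real.rpow_le_rpow_of_nonpos (inv_pos.2 hM) hx.1 hβ
      _ = M ^ |β| := by rw [abs_of_nonpos hβ, Real.inv_rpow hM.le, Real.rpow_neg hM.le]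

section Centering

/-- The centering of the maximum of `n` variables with tail `e^κ u^β e^{-cu}`, as a function of
`l = c⁻¹ log n`. -/
noncomputable def gumbelCentering (c β κ l : ℝ) : ℝ :=
  l + c⁻¹ * (β * Real.log l + κ)

variable (c β κ : ℝ)

lemma tendsto_gumbelCentering_div :
    Tendsto (fun l => gumbelCentering c β κ l / l) atTop (𝓝 1) := by
  have hlog : Tendsto (fun l : ℝ => Real.log l / l) atTop (𝓝 0) :=
    Real.isLittleO_log_id_atTop.tendsto_div_nhds_zero
  have hlim : Tendsto (fun l : ℝ => 1 + c⁻¹ * (β * (Real.log l / l) + κ * l⁻¹)) atTop (𝓝 1) := by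
    simpa using
      (((hlog.const_mul β).add (tendsto_inv_atTop_zero.const_mul κ)).const_mul c⁻¹).const_add 1
  refine hlim.congr' ?_
  filter_upwards [eventually_gt_atTop 0] with l hl
  rw [gumbelCentering]
  field_simp

lemma eventually_lt_gumbelCentering_lt :
    ∀ᶠ l in atTop, 0 < l ∧ l / 2 < gumbelCentering c β κ l ∧ gumbelCentering c β κ l < 2 * l := by
  have hratio : ∀ᶠ l in atTop, gumbelCentering c β κ l / l ∈ Ioo (1 / 2) 2 :=
    (tendsto_gumbelCentering_div c β κ).eventually_mem (Ioo_mem_nhds (by norm_num) (by norm_num))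
  filter_upwards [hratio, eventually_gt_atTop 0] with l ⟨hlow, hup⟩ hl
  rw [lt_div_iff₀ hl] at hlow
  rw [div_lt_iff₀ hl] at hup
  exact ⟨hl, by linarith, hup⟩

lemma exp_neg_mul_gumbelCentering_add (hc : c ≠ 0) {l : ℝ} (hl : 0 < l) (t : ℝ) :
    Real.exp (-(c * (gumbelCentering c β κ l + c⁻¹ * t)))
      = (l ^ β)⁻¹ * Real.exp (-κ) * Real.exp (-(c * l)) * Real.exp (-t) := by
  rw [Real.rpow_def_of_pos hl, ← Real.exp_neg, ← Real.exp_add, ← Real.exp_add, ← Real.exp_add,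
    gumbelCentering]
  congr 1
  field_simp
  ring

lemma exists_eventually_gumbelCentering_add_le (hc : 0 < c) {G : ℝ → ℝ}
    (hG : G =O[atTop] fun u => u ^ β * Real.exp (-(c * u))) :
    ∃ A, ∀ᶠ l in atTop, ∀ t ∈ Icc (-(c * gumbelCentering c β κ l) / 2) 0,
      G (gumbelCentering c β κ l + c⁻¹ * t) ≤ A * Real.exp (-(c * l)) * Real.exp (-t) := by
  obtain ⟨C, hC, hbound⟩ := hG.exists_pos
  obtain ⟨u₀, hu₀⟩ := eventually_atTop.1 hbound.bound
  refine ⟨C * 4 ^ |β| * Real.exp (-κ), ?_⟩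
  filter_upwards [eventually_lt_gumbelCentering_lt c β κ, eventually_ge_atTop (4 * u₀)]
    with l ⟨hl, hlow, hup⟩ hlu₀ t ⟨hLt, ht⟩
  set m := gumbelCentering c β κ l with hm
  set u := m + c⁻¹ * t with hu
  have hmu : m / 2 ≤ u := by
    have hshift : -m / 2 ≤ c⁻¹ * t := by
      rw [← div_eq_inv_mul, le_div_iff₀ hc]
      linarith
    linarith
  have hum : u ≤ m :=
    add_le_of_nonpos_right (mul_nonpos_of_nonneg_of_nonpos (inv_pos.2 hc).le ht)
  have hu_pos : 0 < u := by linarith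
  have hul : u / l ∈ Icc 4⁻¹ 4 :=
    ⟨(le_div_iff₀ hl).2 (by linarith), (div_le_iff₀ hl).2 (by linarith)⟩
  calc G u ≤ ‖G u‖ := Real.le_norm_self _
    _ ≤ C * ‖u ^ β * Real.exp (-(c * u))‖ := hu₀ u (by linarith)
    _ = C * (u ^ β * Real.exp (-(c * u))) := by rw [Real.norm_of_nonneg (by positivity)]
    _ = C * (u / l) ^ β * Real.exp (-κ) * Real.exp (-(c * l)) * Real.exp (-t) := by
        rw [hu, hm, exp_neg_mul_gumbelCentering_add c β κ hc.ne' hl, ← hm, ← hu,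
          Real.div_rpow hu_pos.le hl.le]
        ring
    _ ≤ C * 4 ^ |β| * Real.exp (-κ) * Real.exp (-(c * l)) * Real.exp (-t) := by
        gcongr
        exact rpow_le_rpow_abs_of_mem_Icc four_pos hul β

end Centering

lemma exists_eventually_tail_normalized_le {Ω : Type*} [MeasurableSpace Ω] {μ : Measure Ω}
    [IsFiniteMeasure μ] {Y : Ω → ℝ} (hY : AEMeasurable Y μ) {c β κ : ℝ} (hc : 0 < c)
    (htail : (fun u => μ.real {ω | u < Y ω}) =O[atTop] fun u => u ^ β * Real.exp (-(c * u))) :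
    ∃ A, ∀ᶠ l in atTop, ∀ t ∈ Icc (-(c * gumbelCentering c β κ l) / 2) 0,
      (μ.map fun ω => (Y ω - gumbelCentering c β κ l) / c⁻¹).real (Ici t)
        ≤ A * Real.exp (-(c * l)) * Real.exp (-t) := by
  have hcont : ∀ᶠ u in atTop, ContinuousAt (fun u : ℝ => u ^ β * Real.exp (-(c * u))) u := by
    filter_upwards [eventually_ne_atTop 0] with u hu
    fun_prop (disch := exact .inl hu)
  have hIoi (u : ℝ) : (μ.map Y).real (Ioi u) = μ.real {ω | u < Y ω} :=
    map_measureReal_apply_of_aemeasurable hY measurableSet_Ioi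
  have hIci := isBigO_measureReal_Ici (ν := μ.map Y) hcont (by simpa only [hIoi] using htail)
  simpa only [map_sub_div_measureReal_Ici hY (inv_pos.2 hc)] using
    exists_eventually_gumbelCentering_add_le c β κ hc hIci

theorem conditionKK_from_density_general {Ω : Type*} [MeasurableSpace Ω] {μ : Measure Ω}
    [IsFiniteMeasure μ] {Y : Ω → ℝ} (hY : AEMeasurable Y μ) {c β κ : ℝ} (hc : 0 < c)
    (htail : (fun u => μ.real {ω | u < Y ω}) =O[atTop] fun u => u ^ β * Real.exp (-(c * u)))
    {a b : ℕ → ℝ} (ha : ∀ n : ℕ, a n = c⁻¹)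
    (hb : ∀ n : ℕ, b n = c⁻¹ * (Real.log n + β * Real.log (c⁻¹ * Real.log n) + κ))
    (R : ℝ) {p : ℝ} (hp : 0 < p) :
    IsBoundedUnder (· ≤ ·) atTop fun n : ℕ =>
      (n : ℝ) * ∫ x in Icc (-(b n) / (2 * a n)) R,
        Real.exp (-(x ^ 2) / p) ∂(μ.map fun ω => (Y ω - b n) / a n) := by
  obtain ⟨A, hA⟩ := exists_eventually_tail_normalized_le (κ := κ) hY hc htail
  have hlog : Tendsto (fun n : ℕ => c⁻¹ * Real.log n) atTop atTop :=
    (Real.tendsto_log_atTop.comp tendsto_natCast_atTop_atTop).const_mul_atTop (inv_pos.2 hc)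
  refine ⟨Real.exp p * (A * 2), eventually_map.2 ?_⟩
  filter_upwards [hlog.eventually hA, hlog.eventually (eventually_lt_gumbelCentering_lt c β κ),
    eventually_gt_atTop 0] with n htail_n ⟨hl, hlow, _⟩ hn
  have hn_pos : (0 : ℝ) < n := Nat.cast_pos.2 hn
  have hb_eq : b n = gumbelCentering c β κ (c⁻¹ * Real.log n) := by
    rw [hb, gumbelCentering]
    ring
  have hleft : -(b n) / (2 * a n) = -(c * b n) / 2 := by
    rw [ha]
    field_simp
  have hexp : Real.exp (-(c * (c⁻¹ * Real.log n))) = (n : ℝ)⁻¹ := by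
    rw [mul_inv_cancel_left₀ hc.ne', Real.exp_neg, Real.exp_log hn_pos]
  rw [← hb_eq] at hlow
  rw [hexp, ← hb_eq, ← ha n] at htail_n
  have hb_pos : 0 < b n := by linarith
  have hL : -(c * b n) / 2 ≤ 0 := by linarith [mul_pos hc hb_pos]
  rw [hleft]
  calc (n : ℝ) * ∫ x in Icc (-(c * b n) / 2) R,
        Real.exp (-(x ^ 2) / p) ∂(μ.map fun ω => (Y ω - b n) / a n)
      ≤ n * (Real.exp p * (A * (n : ℝ)⁻¹ * 2)) := by
        gcongr
        exact setIntegral_exp_neg_sq_div_le hp hL htail_n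
    _ = Real.exp p * (A * 2) := by field_simp

/-- condition (conditionKK).  If `P(Y > u) = (1+o(1)) K u^β e^{-cu}`
and `Y` has a density `h` with `P(Y > u) = (1+o(1)) h(u)/c`, then for all sufficiently
large `r > 0` and every `p > 0` the sequence
`n ↦ n ∫_{[-b_n/(2a_n), -r]} e^{-x²/p} dν_n(x)` has finite limsup (is eventually bounded
above), where `ν_n` is the law of `(Y - b_n)/a_n`. -/
theorem conditionKK_from_density
    {Ω : Type*} [MeasureSpace Ω] [IsProbabilityMeasure (ℙ : Measure Ω)]
    (Y : Ω → ℝ) (hY : Measurable Y)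
    (K c β : ℝ) (hK : 0 < K) (hc : 0 < c)
    (htail : Tendsto (fun u : ℝ =>
        (ℙ {ω | Y ω > u}).toReal / (K * u ^ β * Real.exp (-(c * u))))
      atTop (nhds 1))
    (h : ℝ → ℝ) (hnonneg : ∀ x, 0 ≤ h x)
    (hdens : Measure.map Y ℙ
      = MeasureTheory.volume.withDensity (fun x => ENNReal.ofReal (h x)))
    (hasym : Tendsto (fun u : ℝ => (ℙ {ω | Y ω > u}).toReal / (h u / c))
      atTop (nhds 1))
    (a b : ℕ → ℝ)
    (ha : ∀ n : ℕ, a n = c⁻¹)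
    (hb : ∀ n : ℕ, b n = c⁻¹ * (Real.log n + β * Real.log (c⁻¹ * Real.log n) + Real.log K)) :
    ∃ R : ℝ, 0 < R ∧ ∀ r : ℝ, R < r → ∀ p : ℝ, 0 < p →
      IsBoundedUnder (· ≤ ·) atTop (fun n : ℕ =>
        (n : ℝ) * ∫ x in Set.Icc (-(b n) / (2 * a n)) (-r),
          Real.exp (-(x ^ 2) / p) ∂(Measure.map (fun ω => (Y ω - b n) / a n) ℙ)) :=
  ⟨1, one_pos, fun r _ _ hp => conditionKK_from_density_general hY.aemeasurable hc
    (isBigO_of_tendsto_div_const_mul (by simpa only [Measure.real, mul_assoc] using htail))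
    ha hb (-r) hp⟩
end
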